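/- Let n ≥ 2. Then: |ℱ̄ₙ(÷)| = Σ_{k=1}^{n−1} |ℱ̄_k(+, ×)| · |ℱ̄_{n−k}(+, ×)|; |ℬ̄ₙ(÷)| = Σ_{k=1}^{n−1} |ℬ̄_{n−k}(+, −, ×)| · (2|ℱ̄_k(+, ×)| + ½|ℬ̄_k(+, −, ×)|); and |𝒞̄ₙ(÷)| = Σ_{k=1}^{n−1} |𝒞̄_{n−k}(+, −, ×)| · (2|ℱ̄_k(+, ×)| + |ℬ̄_k(+, −, ×)| + |𝒞̄_k(+, −, ×)|). -/

import Mathlib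

/- Common framework: `K = ℝ(x₁,x₂,…)` is the field of rational functions over `ℝ` in
countably many variables (the fraction field of `MvPolynomial ℕ ℝ`), arithmetic
expressions, the permutation action, isomorphism, types, the `EndsWith` classification,
multilinear forms and monicity, isomorphism classes and their counting. -/

open MvPolynomial

noncomputable section

abbrev P : Type := MvPolynomial ℕ ℝ
abbrev K : Type := FractionRing P

def toK : P →+* K := algebraMap P K

/-- The variable `xᵢ`, as an element of `K`. -/
def Xv (i : ℕ) : K := toK (X i)

/-- `Vars f` : the set of variables on which `f` depends, i.e. the variables occurring in a
representation of `f` as a quotient of two coprime polynomials. -/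
def Vars (f : K) : Set ℕ :=
  {i | ∃ p q : P, q ≠ 0 ∧ IsRelPrime p q ∧ f = toK p / toK q ∧ (i ∈ p.vars ∨ i ∈ q.vars)}

/-- `𝒜` : the smallest subset of `K` containing every variable and closed under the four
binary operations applied to expressions with disjoint variable sets. -/
inductive IsAE : K → Prop
  | var (i : ℕ) : IsAE (Xv i)
  | add {g h : K} : IsAE g → IsAE h → Disjoint (Vars g) (Vars h) → IsAE (g + h)
  | sub {g h : K} : IsAE g → IsAE h → Disjoint (Vars g) (Vars h) → IsAE (g - h)
  | mul {g h : K} : IsAE g → IsAE h → Disjoint (Vars g) (Vars h) → IsAE (g * h)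
  | div {g h : K} : IsAE g → IsAE h → Disjoint (Vars g) (Vars h) → IsAE (g / h)

/-- The action `σ·f` of a permutation of the variables on `K`, substituting `σ(xᵢ)` for `xᵢ`. -/
def permAct (σ : Equiv.Perm ℕ) : K ≃+* K :=
  IsFractionRing.ringEquivOfRingEquiv (renameEquiv ℝ σ).toRingEquiv

/-- `f ≅ g` : `f` and `g` are isomorphic, i.e. differ by a permutation of the variables. -/
def Iso (f g : K) : Prop := ∃ σ : Equiv.Perm ℕ, permAct σ f = g

/-- First type: `-f ∉ 𝒜`. -/
def FirstType (f : K) : Prop := IsAE f ∧ ¬ IsAE (-f)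

/-- Second type: `-f ∈ 𝒜` but `f ≇ -f`. -/
def SecondType (f : K) : Prop := IsAE f ∧ IsAE (-f) ∧ ¬ Iso f (-f)

/-- Third type: `-f ∈ 𝒜` and `f ≅ -f`. -/
def ThirdType (f : K) : Prop := IsAE f ∧ IsAE (-f) ∧ Iso f (-f)

/-- The four binary operators. -/
inductive Op : Type
  | add | sub | mul | div
deriving DecidableEq

/-- `EndsWith f o` : the arithmetic expression `f` ends with the operator `o`. -/
inductive EndsWith : K → Op → Prop
  | var (i : ℕ) : EndsWith (Xv i) Op.mul
  | add_base {i j : ℕ} (hij : i ≠ j) : EndsWith (Xv i + Xv j) Op.add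
  | sub_base {i j : ℕ} (hij : i ≠ j) : EndsWith (Xv i - Xv j) Op.sub
  | mul_base {i j : ℕ} (hij : i ≠ j) : EndsWith (Xv i * Xv j) Op.mul
  | div_base {i j : ℕ} (hij : i ≠ j) : EndsWith (Xv i / Xv j) Op.div
  | add_rec {g h : K} {o₁ o₂ : Op} : IsAE g → IsAE h → Disjoint (Vars g) (Vars h) →
      3 ≤ (Vars (g + h)).ncard → o₁ ≠ Op.sub → o₂ ≠ Op.sub →
      EndsWith g o₁ → EndsWith h o₂ → EndsWith (g + h) Op.add
  | mul_rec {g h : K} {o₁ o₂ : Op} : IsAE g → IsAE h → Disjoint (Vars g) (Vars h) →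
      3 ≤ (Vars (g * h)).ncard → o₁ ≠ Op.div → o₂ ≠ Op.div →
      EndsWith g o₁ → EndsWith h o₂ → EndsWith (g * h) Op.mul
  | div_rec {g h : K} {o₁ o₂ : Op} : IsAE g → IsAE h → Disjoint (Vars g) (Vars h) →
      3 ≤ (Vars (g / h)).ncard → o₁ ≠ Op.div → o₂ ≠ Op.div →
      EndsWith g o₁ → EndsWith h o₂ → EndsWith (g / h) Op.div
  | sub_rec {g h : K} {o₁ o₂ : Op} : IsAE g → IsAE h → Disjoint (Vars g) (Vars h) →
      3 ≤ (Vars (g - h)).ncard → o₁ ≠ Op.sub → o₂ ≠ Op.sub → FirstType h →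
      EndsWith g o₁ → EndsWith h o₂ → EndsWith (g - h) Op.sub

/-- `f` ends with one of the operators in `s`. -/
def EndsIn (f : K) (s : Set Op) : Prop := ∃ o ∈ s, EndsWith f o

/-- The binary operation on `K` corresponding to an operator. -/
def applyOp (o : Op) (a b : K) : K :=
  match o with
  | Op.add => a + b
  | Op.sub => a - b
  | Op.mul => a * b
  | Op.div => a / b

/-- The variable index set `{1, …, n}` (for the variables `x₁, …, xₙ`). -/
def varsUpTo (n : ℕ) : Set ℕ := {i | 1 ≤ i ∧ i ≤ n}

/-- `𝒜ₙ` : arithmetic expressions whose variable set is exactly `{x₁, …, xₙ}`. -/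
def AEn (n : ℕ) : Set K := {f | IsAE f ∧ Vars f = varsUpTo n}

/-- A multilinear polynomial: degree at most `1` in each variable. -/
def Multilinear (p : P) : Prop := ∀ i : ℕ, p.degreeOf i ≤ 1

/-- The key of a (multilinear) monomial: the sorted list of variables occurring in it;
keys are compared in the lexicographic order on lists. -/
def monKey (m : ℕ →₀ ℕ) : List ℕ := m.support.sort (· ≤ ·)

/-- A (multilinear) polynomial is monic if the coefficient of its lexicographically
leading (i.e. first) monomial is positive. -/
def MonicML (p : P) : Prop :=
  ∃ m ∈ p.support, 0 < p.coeff m ∧ ∀ m' ∈ p.support, monKey m ≤ monKey m'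

/-- `MLForm f F₁ F₂` : `F₁ / F₂` is the multilinear form of `f`: `F₁, F₂` are coprime
multilinear polynomials, `F₂` is monic, and `f = F₁ / F₂`. -/
def MLForm (f : K) (F₁ F₂ : P) : Prop :=
  Multilinear F₁ ∧ Multilinear F₂ ∧ IsRelPrime F₁ F₂ ∧ F₂ ≠ 0 ∧ MonicML F₂ ∧
    f = toK F₁ / toK F₂

/-- A monic arithmetic expression: the numerator of its multilinear form is monic as well. -/
def MonicAE (f : K) : Prop := ∃ F₁ F₂ : P, MLForm f F₁ F₂ ∧ MonicML F₁

/-- The isomorphism class of `f`. -/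
def classOf (f : K) : Set K := {g | Iso f g}

/-- `S̄` : the set of isomorphism classes of elements of `S`. -/
def classes (S : Set K) : Set (Set K) := classOf '' S

/-- `|S̄|` : the number of isomorphism classes of elements of `S`. -/
def countClasses (S : Set K) : ℕ := (classes S).ncard

/-- The number of isomorphism classes of elements of `S` depending on exactly `k` variables. -/
def gradeCount (S : Set K) (k : ℕ) : ℕ := countClasses {f ∈ S | (Vars f).ncard = k}

/-- `ω_n` for a graded family having `N k` elements in grade `k` : the sum over all
partitions `(k₁^{m₁},…,k_s^{m_s})` of `n` of `∏ⱼ C(N kⱼ + mⱼ - 1, mⱼ)`. -/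
def omega (N : ℕ → ℕ) (n : ℕ) : ℕ :=
  ∑ p : n.Partition,
    ∏ k ∈ p.parts.toFinset, Nat.choose (N k + p.parts.count k - 1) (p.parts.count k)

/-- `ω_n′` : the same sum restricted to non-trivial partitions, i.e. `ω_n - N n`. -/
def omega' (N : ℕ → ℕ) (n : ℕ) : ℕ := omega N n - N n

/-- `𝒜(s)` : arithmetic expressions ending with one of the operators in `s`. -/
def Aset (s : Set Op) : Set K := {f | IsAE f ∧ EndsIn f s}

/-- `ℱ(s)` : first-type arithmetic expressions ending with one of the operators in `s`. -/
def Fset (s : Set Op) : Set K := {f | FirstType f ∧ EndsIn f s}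

/-- `ℬ(s)` : second-type arithmetic expressions ending with one of the operators in `s`. -/
def Bset (s : Set Op) : Set K := {f | SecondType f ∧ EndsIn f s}

/-- `𝒞(s)` : third-type arithmetic expressions ending with one of the operators in `s`. -/
def Cset (s : Set Op) : Set K := {f | ThirdType f ∧ EndsIn f s}

/-- `ℳℬ(s)` : monic second-type arithmetic expressions ending with an operator in `s`. -/
def MBset (s : Set Op) : Set K := {f | SecondType f ∧ MonicAE f ∧ EndsIn f s}

/-
A quotient `g / h` of expressions in disjoint variables, neither ending with `÷`, determines `g`
and `h` up to a common sign. Indeed, every variable of an expression not ending with `÷` is in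
numerator position: it splits off, alone or within a sum of two parts in disjoint variables, as a
factor. The mixed logarithmic derivatives `∂ₖ∂ₘ log f`, which only change sign when `f` is inverted,
show that a variable cannot be in numerator position both in `f` and in `1 / f`; so `g / h`
determines the variables of `g` and of `h`, and therefore `g` and `h` up to a real factor. That
factor is `±1`, because an expression is a quotient of polynomials whose leading coefficients agree
up to sign.

Consequently the type of `g / h` can be read off from those of `g` and `h`, and the class of `g / h`
amounts to the pair of classes `([g], [h])` up to replacing it by `([-g], [-h])`. This replacement
is ruled out once `g` or `h` is restricted to the first type and to one of `[f]`, `[-f]` for each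
second-type `f`, the origin of the factor `½`, and it is trivial on classes of the third type.
-/

section DerivationExtension

open KaehlerDifferential

variable {R S T N : Type*} [CommRing R] [CommRing S] [CommRing T] [Algebra R S] [Algebra R T]
  [Algebra S T] [IsScalarTower R S T] [Algebra.FormallyEtale S T] [AddCommGroup N] [Module R N]
  [Module S N] [Module T N] [IsScalarTower R S N] [IsScalarTower S T N] [IsScalarTower R T N]

/-- The extension of a derivation along a formally étale map `S → T`, for instance a localization;
it comes from the isomorphism `T ⊗[S] Ω[S⁄R] ≃ Ω[T⁄R]`. -/
def derivationExtension (d : Derivation R S N) : Derivation R T N :=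
  ((d.liftKaehlerDifferential.liftBaseChange T).comp
    (tensorKaehlerEquivOfFormallyEtale R S T).symm.toLinearMap).compDer (D R T)

lemma derivationExtension_algebraMap (d : Derivation R S N) (s : S) :
    derivationExtension d (algebraMap S T s) = d s := by
  simp [derivationExtension, tensorKaehlerEquivOfFormallyEtale_symm_D_algebraMap]

end DerivationExtension

instance : Algebra.FormallyEtale P K := .of_isLocalization (nonZeroDivisors P)

/-- The partial derivative `∂/∂xᵢ` on the field of rational functions. -/
def partialDeriv (i : ℕ) : Derivation ℝ K K :=
  derivationExtension ((Algebra.linearMap P K).compDer (pderiv i))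

lemma partialDeriv_toK (i : ℕ) (p : P) : partialDeriv i (toK p) = toK (pderiv i p) :=
  derivationExtension_algebraMap ((Algebra.linearMap P K).compDer (pderiv i)) p

section Polynomial

variable {σ R : Type*} [CommSemiring R] {i : σ} {p : MvPolynomial σ R}

lemma succ_le_degreeOf_of_mem_support_pderiv {m : σ →₀ ℕ} (hm : m ∈ (pderiv i p).support) :
    m i + 1 ≤ p.degreeOf i := by
  rw [mem_support_iff, coeff_pderiv] at hm
  simpa using monomial_le_degreeOf i (mem_support_iff.2 (left_ne_zero_of_mul hm))

lemma degreeOf_pderiv_lt (h : pderiv i p ≠ 0) : (pderiv i p).degreeOf i < p.degreeOf i := by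
  obtain ⟨m, hm⟩ := support_nonempty.2 h
  rw [degreeOf_lt_iff (Nat.zero_lt_of_lt (succ_le_degreeOf_of_mem_support_pderiv hm))]
  exact fun m hm => succ_le_degreeOf_of_mem_support_pderiv hm

variable [NoZeroDivisors R]

lemma pderiv_eq_zero_of_dvd (h : p ∣ pderiv i p) : pderiv i p = 0 := by
  by_contra h0
  obtain ⟨r, hr⟩ := h
  have hdeg := degreeOf_pderiv_lt h0
  rw [hr, degreeOf_mul_eq (left_ne_zero_of_mul (hr ▸ h0)) (right_ne_zero_of_mul (hr ▸ h0))] at hdeg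
  omega

lemma pderiv_eq_zero_iff_notMem_vars [CharZero R] : pderiv i p = 0 ↔ i ∉ p.vars := by
  refine ⟨fun h hi => ?_, pderiv_eq_zero_of_notMem_vars⟩
  obtain ⟨m, hm, hmi⟩ := (mem_vars_iff_mem_support i).1 hi
  have hle : Finsupp.single i 1 ≤ m :=
    Finsupp.single_le_iff.2 (Nat.one_le_iff_ne_zero.2 (Finsupp.mem_support_iff.1 hmi))
  have hcoeff := coeff_pderiv p (m - Finsupp.single i 1) (i := i)
  rw [h, coeff_zero, tsub_add_cancel_of_le hle] at hcoeff
  exact mul_ne_zero (mem_support_iff.1 hm) (Nat.cast_add_one_ne_zero _) hcoeff.symm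

end Polynomial

lemma pderiv_pderiv_comm {σ R : Type*} [CommRing R] (i j : σ) (p : MvPolynomial σ R) :
    pderiv i (pderiv j p) = pderiv j (pderiv i p) := by
  have h : ⁅pderiv (R := R) i, pderiv (R := R) j⁆ = 0 := by
    classical
    refine derivation_ext fun k => ?_
    simp only [Derivation.commutator_apply, pderiv_X, Pi.single_apply]
    split_ifs <;> simp
  simpa [Derivation.commutator_apply, sub_eq_zero] using congr($h p)

lemma toK_injective : Function.Injective toK := IsFractionRing.injective P K

lemma toK_ne_zero {p : P} (h : p ≠ 0) : toK p ≠ 0 :=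
  (map_ne_zero_iff toK toK_injective).2 h

lemma exists_eq_toK_div_toK (f : K) :
    ∃ p q : P, q ≠ 0 ∧ IsRelPrime p q ∧ f = toK p / toK q := by
  obtain ⟨p, q, hpq, hf⟩ := IsFractionRing.exists_reduced_fraction (A := P) f
  exact ⟨p, q, nonZeroDivisors.coe_ne_zero q, hpq, by rw [← hf, IsFractionRing.mk'_eq_div]; rfl⟩

lemma derivation_ext_toK {d₁ d₂ : Derivation ℝ K K} (h : ∀ p, d₁ (toK p) = d₂ (toK p)) :
    d₁ = d₂ := by
  ext f
  obtain ⟨p, q, -, -, rfl⟩ := exists_eq_toK_div_toK f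
  simp only [Derivation.leibniz_div, h]

lemma partialDeriv_comm (i j : ℕ) (f : K) :
    partialDeriv i (partialDeriv j f) = partialDeriv j (partialDeriv i f) := by
  have h : ⁅partialDeriv i, partialDeriv j⁆ = 0 := derivation_ext_toK fun p => by
    simp [Derivation.commutator_apply, partialDeriv_toK, pderiv_pderiv_comm i j]
  simpa [Derivation.commutator_apply, sub_eq_zero] using congr($h f)

lemma partialDeriv_Xv (i j : ℕ) : partialDeriv i (Xv j) = if i = j then 1 else 0 := by
  rw [Xv, partialDeriv_toK, pderiv_X, Pi.single_apply]
  split_ifs <;> simp_all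

lemma partialDeriv_toK_div_toK_eq_zero_iff {p q : P} (hq : q ≠ 0) (hpq : IsRelPrime p q) (i : ℕ) :
    partialDeriv i (toK p / toK q) = 0 ↔ i ∉ p.vars ∧ i ∉ q.vars := by
  have hvanish : partialDeriv i (toK p / toK q) = 0 ↔ q * pderiv i p = p * pderiv i q := by
    simp [Derivation.leibniz_div, partialDeriv_toK, toK_ne_zero hq, sub_eq_zero, ← map_mul,
      toK_injective.eq_iff]
  rw [hvanish, ← pderiv_eq_zero_iff_notMem_vars, ← pderiv_eq_zero_iff_notMem_vars]
  refine ⟨fun h => ?_, fun h => by rw [h.1, h.2, mul_zero, mul_zero]⟩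
  have hq' : pderiv i q = 0 := pderiv_eq_zero_of_dvd (hpq.symm.dvd_of_dvd_mul_left ⟨_, h.symm⟩)
  rw [hq', mul_zero, mul_eq_zero, or_iff_right hq] at h
  exact ⟨h, hq'⟩

lemma mem_Vars_iff {i : ℕ} {f : K} : i ∈ Vars f ↔ partialDeriv i f ≠ 0 := by
  constructor
  · rintro ⟨p, q, hq, hpq, rfl, h⟩
    rw [Ne, partialDeriv_toK_div_toK_eq_zero_iff hq hpq]
    tauto
  · intro h
    obtain ⟨p, q, hq, hpq, rfl⟩ := exists_eq_toK_div_toK f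
    rw [Ne, partialDeriv_toK_div_toK_eq_zero_iff hq hpq] at h
    exact ⟨p, q, hq, hpq, rfl, by tauto⟩

lemma notMem_Vars_iff {i : ℕ} {f : K} : i ∉ Vars f ↔ partialDeriv i f = 0 := by
  rw [mem_Vars_iff, not_not]

lemma exists_eq_toK_C_of_Vars_eq_empty {f : K} (h : Vars f = ∅) : ∃ c : ℝ, f = toK (C c) := by
  obtain ⟨p, q, hq, hpq, rfl⟩ := exists_eq_toK_div_toK f
  have hpqv (i : ℕ) : i ∉ p.vars ∧ i ∉ q.vars := by
    rw [← partialDeriv_toK_div_toK_eq_zero_iff hq hpq, ← notMem_Vars_iff, h]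
    exact Set.notMem_empty i
  obtain ⟨a, rfl⟩ : ∃ a, p = C a :=
    ⟨_, vars_eq_empty_iff_eq_C.1 (Finset.eq_empty_of_forall_notMem fun i => (hpqv i).1)⟩
  obtain ⟨b, rfl⟩ : ∃ b, q = C b :=
    ⟨_, vars_eq_empty_iff_eq_C.1 (Finset.eq_empty_of_forall_notMem fun i => (hpqv i).2)⟩
  have hb : b ≠ 0 := by rintro rfl; simp at hq
  exact ⟨a / b, by rw [div_eq_iff (toK_ne_zero hq), ← map_mul, ← map_mul, div_mul_cancel₀ _ hb]⟩

lemma Vars_zero : Vars 0 = ∅ :=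
  Set.eq_empty_of_forall_notMem fun k => notMem_Vars_iff.2 (map_zero (partialDeriv k))

lemma Vars_one : Vars 1 = ∅ :=
  Set.eq_empty_of_forall_notMem fun k => notMem_Vars_iff.2 (partialDeriv k).map_one_eq_zero

lemma Vars_neg (f : K) : Vars (-f) = Vars f := by
  ext i; simp [mem_Vars_iff]

lemma Vars_inv (f : K) : Vars f⁻¹ = Vars f := by
  ext i
  obtain rfl | hf := eq_or_ne f 0
  · simp
  · simp [mem_Vars_iff, Derivation.leibniz_inv, hf]

lemma Vars_Xv (i : ℕ) : Vars (Xv i) = {i} := by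
  ext j; simp [mem_Vars_iff, partialDeriv_Xv]

lemma ne_zero_of_Vars_nonempty {f : K} (h : (Vars f).Nonempty) : f ≠ 0 := by
  rintro rfl
  obtain ⟨i, hi⟩ := h
  exact mem_Vars_iff.1 hi (map_zero _)

section Disjoint

variable {f g : K}

lemma Vars_add (h : Disjoint (Vars f) (Vars g)) : Vars (f + g) = Vars f ∪ Vars g := by
  ext i
  have hi : i ∈ Vars f → i ∉ Vars g := fun hf => Set.disjoint_left.1 h hf
  rw [notMem_Vars_iff] at hi
  simp only [Set.mem_union, mem_Vars_iff, map_add] at hi ⊢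
  by_cases hf : partialDeriv i f = 0
  · simp [hf]
  · simp [hf, hi hf]

lemma Vars_sub (h : Disjoint (Vars f) (Vars g)) : Vars (f - g) = Vars f ∪ Vars g := by
  rw [sub_eq_add_neg, Vars_add (by rwa [Vars_neg]), Vars_neg]

lemma Vars_mul (h : Disjoint (Vars f) (Vars g)) (hf : f ≠ 0) (hg : g ≠ 0) :
    Vars (f * g) = Vars f ∪ Vars g := by
  ext i
  have hi : i ∈ Vars f → i ∉ Vars g := fun hf => Set.disjoint_left.1 h hf
  rw [notMem_Vars_iff] at hi
  simp only [Set.mem_union, mem_Vars_iff, Derivation.leibniz, smul_eq_mul] at hi ⊢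
  by_cases hfi : partialDeriv i f = 0
  · simp [hfi, hf]
  · simp [hfi, hi hfi, hg]

lemma Vars_div (h : Disjoint (Vars f) (Vars g)) (hf : f ≠ 0) (hg : g ≠ 0) :
    Vars (f / g) = Vars f ∪ Vars g := by
  rw [div_eq_mul_inv, Vars_mul (by rwa [Vars_inv]) hf (inv_ne_zero hg), Vars_inv]

end Disjoint

lemma Xv_ne_zero (i : ℕ) : Xv i ≠ 0 := ne_zero_of_Vars_nonempty (by simp [Vars_Xv])

lemma disjoint_Vars_Xv {i j : ℕ} : Disjoint (Vars (Xv i)) (Vars (Xv j)) ↔ i ≠ j := by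
  simp [Vars_Xv]

namespace IsAE

variable {f g h : K}

lemma Vars_nonempty (hf : IsAE f) : (Vars f).Nonempty := by
  induction hf with
  | var i => simp [Vars_Xv]
  | add _ _ d ihg _ => rw [Vars_add d]; exact ihg.inl
  | sub _ _ d ihg _ => rw [Vars_sub d]; exact ihg.inl
  | mul _ _ d ihg ihh =>
    rw [Vars_mul d (ne_zero_of_Vars_nonempty ihg) (ne_zero_of_Vars_nonempty ihh)]; exact ihg.inl
  | div _ _ d ihg ihh =>
    rw [Vars_div d (ne_zero_of_Vars_nonempty ihg) (ne_zero_of_Vars_nonempty ihh)]; exact ihg.inl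

lemma ne_zero (hf : IsAE f) : f ≠ 0 := ne_zero_of_Vars_nonempty hf.Vars_nonempty

lemma exists_applyOp (hf : IsAE f) :
    (∃ i, f = Xv i) ∨ ∃ o g h, IsAE g ∧ IsAE h ∧ Disjoint (Vars g) (Vars h) ∧
      Vars f = Vars g ∪ Vars h ∧ f = applyOp o g h := by
  cases hf with
  | var i => exact .inl ⟨i, rfl⟩
  | add hg hh d => exact .inr ⟨.add, _, _, hg, hh, d, Vars_add d, rfl⟩
  | sub hg hh d => exact .inr ⟨.sub, _, _, hg, hh, d, Vars_sub d, rfl⟩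
  | mul hg hh d => exact .inr ⟨.mul, _, _, hg, hh, d, Vars_mul d hg.ne_zero hh.ne_zero, rfl⟩
  | div hg hh d => exact .inr ⟨.div, _, _, hg, hh, d, Vars_div d hg.ne_zero hh.ne_zero, rfl⟩

lemma Vars_finite (hf : IsAE f) : (Vars f).Finite := by
  induction hf with
  | var i => simp [Vars_Xv]
  | add _ _ d ihg ihh => rw [Vars_add d]; exact ihg.union ihh
  | sub _ _ d ihg ihh => rw [Vars_sub d]; exact ihg.union ihh
  | mul hg hh d ihg ihh => rw [Vars_mul d hg.ne_zero hh.ne_zero]; exact ihg.union ihh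
  | div hg hh d ihg ihh => rw [Vars_div d hg.ne_zero hh.ne_zero]; exact ihg.union ihh

lemma ncard_Vars_pos (hf : IsAE f) : 0 < (Vars f).ncard :=
  (Set.ncard_pos hf.Vars_finite).2 hf.Vars_nonempty

lemma ncard_Vars_union (hg : IsAE g) (hh : IsAE h) (d : Disjoint (Vars g) (Vars h)) :
    (Vars g ∪ Vars h).ncard = (Vars g).ncard + (Vars h).ncard :=
  Set.ncard_union_eq d hg.Vars_finite hh.Vars_finite

lemma exists_eq_Xv (hf : IsAE f) (hcard : (Vars f).ncard = 1) : ∃ i, f = Xv i := by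
  obtain hf | ⟨o, g, h, hg, hh, d, hv, -⟩ := hf.exists_applyOp
  · exact hf
  · have := hg.ncard_Vars_union hh d
    have := hg.ncard_Vars_pos
    have := hh.ncard_Vars_pos
    rw [hv] at hcard
    omega

end IsAE

lemma firstType_Xv (i : ℕ) : FirstType (Xv i) := by
  refine ⟨.var i, fun h => ?_⟩
  obtain ⟨j, hj⟩ := h.exists_eq_Xv (by simp [Vars_neg, Vars_Xv])
  obtain rfl : i = j := by simpa [Vars_neg, Vars_Xv] using congrArg Vars hj
  exact Xv_ne_zero i (neg_eq_self.1 hj)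

lemma EndsWith.isAE {f : K} {o : Op} (h : EndsWith f o) : IsAE f := by
  cases h with
  | var i => exact .var i
  | add_base h => exact .add (.var _) (.var _) (disjoint_Vars_Xv.2 h)
  | sub_base h => exact .sub (.var _) (.var _) (disjoint_Vars_Xv.2 h)
  | mul_base h => exact .mul (.var _) (.var _) (disjoint_Vars_Xv.2 h)
  | div_base h => exact .div (.var _) (.var _) (disjoint_Vars_Xv.2 h)
  | add_rec hg hh d => exact .add hg hh d
  | mul_rec hg hh d => exact .mul hg hh d
  | div_rec hg hh d => exact .div hg hh d
  | sub_rec hg hh d => exact .sub hg hh d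

section Lead

/-- `f` is a quotient of polynomials whose leading coefficients agree up to sign and whose leading
exponents differ, but only at variables of `f`. -/
def HasUnitLead (m : MonomialOrder ℕ) (f : K) : Prop :=
  ∃ p q : P, p ≠ 0 ∧ q ≠ 0 ∧ f = toK p / toK q ∧ m.degree p ≠ m.degree q ∧
    (∀ i ∉ Vars f, m.degree p i = m.degree q i) ∧ |m.leadingCoeff p| = |m.leadingCoeff q|

variable {m : MonomialOrder ℕ} {f g : K}

lemma HasUnitLead.inv (hf : HasUnitLead m f) : HasUnitLead m f⁻¹ := by
  obtain ⟨p, q, hp, hq, rfl, hne, hdeg, hlc⟩ := hf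
  refine ⟨q, p, hq, hp, inv_div _ _, hne.symm, fun i hi => ?_, hlc.symm⟩
  rw [Vars_inv] at hi
  exact (hdeg i hi).symm

lemma HasUnitLead.neg (hf : HasUnitLead m f) : HasUnitLead m (-f) := by
  obtain ⟨p, q, hp, hq, rfl, hne, hdeg, hlc⟩ := hf
  refine ⟨-p, q, neg_ne_zero.2 hp, hq, by rw [map_neg, neg_div], by rwa [m.degree_neg],
    fun i hi => ?_, by rwa [m.leadingCoeff_neg, abs_neg]⟩
  rw [Vars_neg] at hi
  rw [m.degree_neg, hdeg i hi]

/-- Exponent vectors supported on disjoint sets cannot cancel. -/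
lemma degree_add_ne_of_disjoint {S T : Set ℕ} (d : Disjoint S T) {a b c e : ℕ →₀ ℕ}
    (hne : a ≠ b) (hab : ∀ i ∉ S, a i = b i) (hce : ∀ i ∉ T, c i = e i) : a + c ≠ b + e := by
  refine fun h => hne (Finsupp.ext fun i => ?_)
  by_cases hi : i ∈ S
  · have hi' := DFunLike.congr_fun h i
    rw [Finsupp.add_apply, Finsupp.add_apply, hce i (Set.disjoint_left.1 d hi)] at hi'
    exact Nat.add_right_cancel hi'
  · exact hab i hi

lemma HasUnitLead.mul (hf : HasUnitLead m f) (hg : HasUnitLead m g)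
    (d : Disjoint (Vars f) (Vars g)) : HasUnitLead m (f * g) := by
  obtain ⟨p, q, hp, hq, hfpq, hne, hdeg, hlc⟩ := hf
  obtain ⟨a, b, ha, hb, hgab, -, hdeg', hlc'⟩ := hg
  have hv : Vars (f * g) = Vars f ∪ Vars g := Vars_mul d
    (hfpq ▸ div_ne_zero (toK_ne_zero hp) (toK_ne_zero hq))
    (hgab ▸ div_ne_zero (toK_ne_zero ha) (toK_ne_zero hb))
  refine ⟨p * a, q * b, mul_ne_zero hp ha, mul_ne_zero hq hb,
    by rw [hfpq, hgab, map_mul, map_mul, div_mul_div_comm], ?_, fun i hi => ?_, ?_⟩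
  · rw [m.degree_mul hp ha, m.degree_mul hq hb]
    exact degree_add_ne_of_disjoint d hne hdeg hdeg'
  · rw [hv, Set.mem_union, not_or] at hi
    rw [m.degree_mul hp ha, m.degree_mul hq hb, Finsupp.add_apply, Finsupp.add_apply,
      hdeg i hi.1, hdeg' i hi.2]
  · rw [m.leadingCoeff_mul, m.leadingCoeff_mul, abs_mul, abs_mul, hlc, hlc']

lemma HasUnitLead.add (hf : HasUnitLead m f) (hg : HasUnitLead m g)
    (d : Disjoint (Vars f) (Vars g)) : HasUnitLead m (f + g) := by
  have hv := Vars_add d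
  obtain ⟨p, q, hp, hq, hfpq, hne, hdeg, hlc⟩ := hf
  obtain ⟨a, b, ha, hb, hgab, hne', hdeg', hlc'⟩ := hg
  wlog hlt : m.toSyn (m.degree (a * q)) < m.toSyn (m.degree (p * b)) generalizing f g p q a b
  · rw [add_comm]
    refine this d.symm (by rw [add_comm, hv, Set.union_comm]) a b ha hb hgab hne' hdeg' hlc'
      p q hp hq hfpq hne hdeg hlc (lt_of_le_of_ne (not_lt.1 hlt) fun h => ?_)
    replace h := m.toSyn.injective h
    rw [m.degree_mul hp hb, m.degree_mul ha hq, add_comm (m.degree a)] at h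
    exact degree_add_ne_of_disjoint d hne hdeg (fun i hi => (hdeg' i hi).symm) h
  have hdegsum : m.degree (p * b + a * q) = m.degree p + m.degree b := by
    rw [m.degree_add_of_lt hlt, m.degree_mul hp hb]
  have hlcsum : m.leadingCoeff (p * b + a * q) = m.leadingCoeff p * m.leadingCoeff b := by
    rw [m.leadingCoeff_add_of_lt hlt, m.leadingCoeff_mul]
  refine ⟨p * b + a * q, q * b, ?_, mul_ne_zero hq hb, ?_, ?_, fun i hi => ?_, ?_⟩
  · rw [← m.leadingCoeff_ne_zero_iff, hlcsum]
    exact mul_ne_zero (m.leadingCoeff_ne_zero_iff.2 hp) (m.leadingCoeff_ne_zero_iff.2 hb)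
  · rw [hfpq, hgab, div_add_div _ _ (toK_ne_zero hq) (toK_ne_zero hb)]
    simp only [map_add, map_mul, mul_comm]
  · rw [hdegsum, m.degree_mul hq hb]
    exact fun h => hne (add_right_cancel h)
  · rw [hv, Set.mem_union, not_or] at hi
    rw [hdegsum, m.degree_mul hq hb, Finsupp.add_apply, Finsupp.add_apply, hdeg i hi.1]
  · rw [hlcsum, m.leadingCoeff_mul, abs_mul, abs_mul, hlc]

lemma IsAE.hasUnitLead (hf : IsAE f) : HasUnitLead m f := by
  induction hf with
  | var i =>
    refine ⟨X i, 1, X_ne_zero i, one_ne_zero, by simp [Xv], ?_, fun j hj => ?_, ?_⟩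
    · simp [m.degree_X]
    · rw [Vars_Xv, Set.mem_singleton_iff] at hj
      simp [m.degree_X, Ne.symm hj]
    · rw [m.leadingCoeff_X, m.leadingCoeff_one]
  | add _ _ d ihg ihh => exact ihg.add ihh d
  | sub _ _ d ihg ihh => rw [sub_eq_add_neg]; exact ihg.add ihh.neg (by rwa [Vars_neg])
  | mul _ _ d ihg ihh => exact ihg.mul ihh d
  | div _ _ d ihg ihh => rw [div_eq_mul_inv]; exact ihg.mul ihh.inv (by rwa [Vars_inv])

end Lead

/-- Lexicographic orders on exponents need `>` on the variables to be well-founded, hence the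
reversal of `ℕ`. -/
def natLex : MonomialOrder ℕ := MonomialOrder.lex (σ := ℕᵒᵈ)

lemma IsAE.eq_or_eq_neg_of_eq_C_mul {f g : K} (hf : IsAE f) (hg : IsAE g) {c : ℝ}
    (h : f = toK (C c) * g) : f = g ∨ f = -g := by
  obtain ⟨p, q, -, hq, hfpq, -, -, hlc⟩ := hf.hasUnitLead (m := natLex)
  obtain ⟨a, b, ha, hb, hgab, -, -, hlc'⟩ := hg.hasUnitLead (m := natLex)
  have hpoly : p * b = C c * a * q := by
    apply toK_injective
    rw [hfpq, hgab, div_eq_iff (toK_ne_zero hq)] at h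
    have := toK_ne_zero hb
    simp only [map_mul, h]
    field_simp
  have habs : |c| = 1 := by
    have hlead := congrArg (fun r => |natLex.leadingCoeff r|) hpoly
    simp only [natLex.leadingCoeff_mul, natLex.leadingCoeff_C, abs_mul, hlc, ← hlc'] at hlead
    rw [mul_assoc, mul_comm |natLex.leadingCoeff q|, eq_comm] at hlead
    exact (mul_eq_right₀ (mul_ne_zero (abs_ne_zero.2 (natLex.leadingCoeff_ne_zero_iff.2 ha))
      (abs_ne_zero.2 (natLex.leadingCoeff_ne_zero_iff.2 hq)))).1 hlead
  obtain rfl | rfl := eq_or_eq_neg_of_abs_eq habs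
  · left; simpa using h
  · right; simpa using h

section PermAct

variable {σ τ : Equiv.Perm ℕ} {f g : K}

lemma permAct_toK (σ : Equiv.Perm ℕ) (p : P) : permAct σ (toK p) = toK (rename σ p) :=
  IsFractionRing.ringEquivOfRingEquiv_algebraMap ..

lemma permAct_Xv (σ : Equiv.Perm ℕ) (i : ℕ) : permAct σ (Xv i) = Xv (σ i) := by
  rw [Xv, permAct_toK, rename_X, Xv]

lemma permAct_permAct (σ τ : Equiv.Perm ℕ) (f : K) :
    permAct σ (permAct τ f) = permAct (σ * τ) f := by
  obtain ⟨p, q, -, -, rfl⟩ := exists_eq_toK_div_toK f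
  simp only [map_div₀, permAct_toK, rename_rename, Equiv.Perm.coe_mul]

lemma permAct_one (f : K) : permAct 1 f = f := by
  obtain ⟨p, q, -, -, rfl⟩ := exists_eq_toK_div_toK f
  simp only [map_div₀, permAct_toK, Equiv.Perm.coe_one, rename_id_apply]

lemma permAct_inv_permAct (σ : Equiv.Perm ℕ) (f : K) : permAct σ⁻¹ (permAct σ f) = f := by
  rw [permAct_permAct, inv_mul_cancel, permAct_one]

lemma partialDeriv_permAct (σ : Equiv.Perm ℕ) (i : ℕ) (f : K) :
    partialDeriv (σ i) (permAct σ f) = permAct σ (partialDeriv i f) := by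
  obtain ⟨p, q, -, -, rfl⟩ := exists_eq_toK_div_toK f
  simp [Derivation.leibniz_div, partialDeriv_toK, permAct_toK, pderiv_rename σ.injective]

lemma Vars_permAct (σ : Equiv.Perm ℕ) (f : K) : Vars (permAct σ f) = σ '' Vars f := by
  ext i
  obtain ⟨j, rfl⟩ := σ.surjective i
  rw [σ.injective.mem_set_image, mem_Vars_iff, mem_Vars_iff, partialDeriv_permAct,
    map_ne_zero_iff _ (permAct σ).injective]

lemma ncard_Vars_permAct (σ : Equiv.Perm ℕ) (f : K) :
    (Vars (permAct σ f)).ncard = (Vars f).ncard := by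
  rw [Vars_permAct, Set.ncard_image_of_injective _ σ.injective]

lemma disjoint_Vars_permAct (σ : Equiv.Perm ℕ) (d : Disjoint (Vars f) (Vars g)) :
    Disjoint (Vars (permAct σ f)) (Vars (permAct σ g)) := by
  rwa [Vars_permAct, Vars_permAct, Set.disjoint_image_iff σ.injective]

lemma permAct_congr (h : ∀ i ∈ Vars f, σ i = τ i) : permAct σ f = permAct τ f := by
  obtain ⟨p, q, hq, hpq, hf⟩ := exists_eq_toK_div_toK f
  have hrename {r : P} (hr : ∀ i ∈ r.vars, i ∈ Vars f) : rename σ r = rename τ r :=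
    hom_congr_vars (f₁ := (rename σ : P →ₐ[ℝ] P).toRingHom)
      (f₂ := (rename τ : P →ₐ[ℝ] P).toRingHom) (by ext; simp)
      (fun i hi _ => by simp [h i (hr i hi)]) rfl
  rw [hf, map_div₀, map_div₀, permAct_toK, permAct_toK, permAct_toK, permAct_toK,
    hrename fun i hi => ⟨p, q, hq, hpq, hf, .inl hi⟩,
    hrename fun i hi => ⟨p, q, hq, hpq, hf, .inr hi⟩]

lemma IsAE.permAct (hf : IsAE f) (σ : Equiv.Perm ℕ) : IsAE (permAct σ f) := by
  induction hf with
  | var i => rw [permAct_Xv]; exact .var _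
  | add _ _ d ihg ihh => rw [map_add]; exact .add ihg ihh (disjoint_Vars_permAct σ d)
  | sub _ _ d ihg ihh => rw [map_sub]; exact .sub ihg ihh (disjoint_Vars_permAct σ d)
  | mul _ _ d ihg ihh => rw [map_mul]; exact .mul ihg ihh (disjoint_Vars_permAct σ d)
  | div _ _ d ihg ihh => rw [map_div₀]; exact .div ihg ihh (disjoint_Vars_permAct σ d)

lemma FirstType.permAct (hf : FirstType f) (σ : Equiv.Perm ℕ) : FirstType (permAct σ f) := by
  refine ⟨hf.1.permAct σ, fun h => hf.2 ?_⟩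
  simpa [permAct_inv_permAct] using h.permAct σ⁻¹

lemma EndsWith.permAct {o : Op} (hf : EndsWith f o) (σ : Equiv.Perm ℕ) :
    EndsWith (permAct σ f) o := by
  induction hf with
  | var i => rw [permAct_Xv]; exact .var _
  | add_base h => rw [map_add, permAct_Xv, permAct_Xv]; exact .add_base (σ.injective.ne h)
  | sub_base h => rw [map_sub, permAct_Xv, permAct_Xv]; exact .sub_base (σ.injective.ne h)
  | mul_base h => rw [map_mul, permAct_Xv, permAct_Xv]; exact .mul_base (σ.injective.ne h)
  | div_base h => rw [map_div₀, permAct_Xv, permAct_Xv]; exact .div_base (σ.injective.ne h)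
  | add_rec hg hh d hcard ho₁ ho₂ _ _ ihg ihh =>
    rw [← ncard_Vars_permAct σ, map_add] at hcard
    rw [map_add]
    exact .add_rec (hg.permAct σ) (hh.permAct σ) (disjoint_Vars_permAct σ d) hcard ho₁ ho₂ ihg ihh
  | mul_rec hg hh d hcard ho₁ ho₂ _ _ ihg ihh =>
    rw [← ncard_Vars_permAct σ, map_mul] at hcard
    rw [map_mul]
    exact .mul_rec (hg.permAct σ) (hh.permAct σ) (disjoint_Vars_permAct σ d) hcard ho₁ ho₂ ihg ihh
  | div_rec hg hh d hcard ho₁ ho₂ _ _ ihg ihh =>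
    rw [← ncard_Vars_permAct σ, map_div₀] at hcard
    rw [map_div₀]
    exact .div_rec (hg.permAct σ) (hh.permAct σ) (disjoint_Vars_permAct σ d) hcard ho₁ ho₂ ihg ihh
  | sub_rec hg hh d hcard ho₁ ho₂ hft _ _ ihg ihh =>
    rw [← ncard_Vars_permAct σ, map_sub] at hcard
    rw [map_sub]
    exact .sub_rec (hg.permAct σ) (hh.permAct σ) (disjoint_Vars_permAct σ d) hcard ho₁ ho₂
      (hft.permAct σ) ihg ihh

end PermAct

lemma exists_perm_eqOn {α : Type*} {φ : α → α} {S : Set α} (hS : S.Finite) (hφ : Set.InjOn φ S) :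
    ∃ ρ : Equiv.Perm α, Set.EqOn ρ φ S := by
  have := hS.fintype
  let e := Fintype.equivFin S
  obtain ⟨ρ, hρ⟩ := (Equiv.Perm.isMultiplyPretransitive α (Fintype.card S)).exists_smul_eq
    (e.symm.toEmbedding.trans (.subtype (· ∈ S)))
    (e.symm.toEmbedding.trans ⟨fun i => φ i, fun i j h => Subtype.ext (hφ i.2 j.2 h)⟩)
  refine ⟨ρ, fun i hi => ?_⟩
  have hi' : ρ ↑(e.symm (e ⟨i, hi⟩)) = φ ↑(e.symm (e ⟨i, hi⟩)) := congr($hρ (e ⟨i, hi⟩))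
  rwa [e.symm_apply_apply] at hi'

lemma exists_perm_eqOn_eqOn {α : Type*} {S T : Set α} (hS : S.Finite) (hT : T.Finite)
    (d : Disjoint S T) {σ τ : Equiv.Perm α} (d' : Disjoint (σ '' S) (τ '' T)) :
    ∃ ρ : Equiv.Perm α, Set.EqOn ρ σ S ∧ Set.EqOn ρ τ T := by
  classical
  have hσ : Set.EqOn (S.piecewise σ τ) σ S := S.piecewise_eqOn σ τ
  have hτ : Set.EqOn (S.piecewise σ τ) τ T :=
    (S.piecewise_eqOn_compl σ τ).mono d.subset_compl_left
  obtain ⟨ρ, hρ⟩ := exists_perm_eqOn (φ := S.piecewise σ τ) (hS.union hT) <| by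
    refine (Set.injOn_union d).2 ⟨σ.injective.injOn.congr hσ.symm, τ.injective.injOn.congr hτ.symm,
      fun i hi j hj h => ?_⟩
    rw [hσ hi, hτ hj] at h
    exact Set.disjoint_left.1 d' ⟨i, hi, rfl⟩ ⟨j, hj, h.symm⟩
  exact ⟨ρ, (hρ.mono Set.subset_union_left).trans hσ, (hρ.mono Set.subset_union_right).trans hτ⟩

namespace Iso

variable {f g h : K}

protected lemma refl (f : K) : Iso f f := ⟨1, permAct_one f⟩

protected lemma symm (hfg : Iso f g) : Iso g f := by
  obtain ⟨σ, rfl⟩ := hfg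
  exact ⟨σ⁻¹, permAct_inv_permAct σ f⟩

protected lemma trans (hfg : Iso f g) (hgh : Iso g h) : Iso f h := by
  obtain ⟨σ, rfl⟩ := hfg
  obtain ⟨τ, rfl⟩ := hgh
  exact ⟨τ * σ, (permAct_permAct τ σ f).symm⟩

protected lemma neg (hfg : Iso f g) : Iso (-f) (-g) := by
  obtain ⟨σ, rfl⟩ := hfg
  exact ⟨σ, map_neg _ _⟩

lemma ncard_Vars_eq (hfg : Iso f g) : (Vars f).ncard = (Vars g).ncard := by
  obtain ⟨σ, rfl⟩ := hfg
  exact (ncard_Vars_permAct σ f).symm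

lemma isAE (hfg : Iso f g) (hf : IsAE f) : IsAE g := by
  obtain ⟨σ, rfl⟩ := hfg
  exact hf.permAct σ

lemma endsIn {s : Set Op} (hfg : Iso f g) : EndsIn f s → EndsIn g s := by
  obtain ⟨σ, rfl⟩ := hfg
  exact fun ⟨o, ho, hf⟩ => ⟨o, ho, hf.permAct σ⟩

lemma firstType (hfg : Iso f g) (hf : FirstType f) : FirstType g := by
  obtain ⟨σ, rfl⟩ := hfg
  exact hf.permAct σ

lemma secondType (hfg : Iso f g) (hf : SecondType f) : SecondType g :=
  ⟨hfg.isAE hf.1, hfg.neg.isAE hf.2.1, fun h => hf.2.2 ((hfg.trans h).trans hfg.neg.symm)⟩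

lemma thirdType (hfg : Iso f g) (hf : ThirdType f) : ThirdType g :=
  ⟨hfg.isAE hf.1, hfg.neg.isAE hf.2.1, (hfg.symm.trans hf.2.2).trans hfg.neg⟩

lemma exists_perm_of_disjoint {f' g' : K} (hf : IsAE f) (hg : IsAE g)
    (d : Disjoint (Vars f) (Vars g)) (d' : Disjoint (Vars f') (Vars g')) (hff' : Iso f f')
    (hgg' : Iso g g') : ∃ ρ : Equiv.Perm ℕ, permAct ρ f = f' ∧ permAct ρ g = g' := by
  obtain ⟨σ, rfl⟩ := hff'
  obtain ⟨τ, rfl⟩ := hgg'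
  rw [Vars_permAct, Vars_permAct] at d'
  obtain ⟨ρ, hσ, hτ⟩ := exists_perm_eqOn_eqOn hf.Vars_finite hg.Vars_finite d d'
  exact ⟨ρ, permAct_congr hσ, permAct_congr hτ⟩

end Iso

lemma classOf_eq_classOf_iff {f g : K} : classOf f = classOf g ↔ Iso f g := by
  refine ⟨fun h => ?_, fun h => Set.ext fun _ => ⟨h.symm.trans, h.trans⟩⟩
  have hg : g ∈ classOf g := Iso.refl g
  rwa [← h] at hg

section LogarithmicDerivatives

variable {f g : K} {i k l m : ℕ}

lemma partialDeriv_eq_zero_of_disjoint (d : Disjoint (Vars f) (Vars g)) (hk : k ∈ Vars f) :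
    partialDeriv k g = 0 :=
  notMem_Vars_iff.1 (Set.disjoint_left.1 d hk)

/-- The logarithmic derivative `∂ᵢf / f`. -/
def partialLogDeriv (i : ℕ) (f : K) : K := partialDeriv i f / f

lemma partialLogDeriv_inv (i : ℕ) (f : K) : partialLogDeriv i f⁻¹ = -partialLogDeriv i f := by
  rcases eq_or_ne f 0 with rfl | hf
  · simp [partialLogDeriv]
  · rw [partialLogDeriv, partialLogDeriv, Derivation.leibniz_inv, smul_eq_mul]
    field_simp

lemma partialLogDeriv_mul (i : ℕ) (hf : f ≠ 0) (hg : g ≠ 0) :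
    partialLogDeriv i (f * g) = partialLogDeriv i f + partialLogDeriv i g := by
  simp only [partialLogDeriv, Derivation.leibniz, smul_eq_mul]
  field_simp
  ring

/-- The mixed logarithmic derivative `∂ₖ(∂ₘf / f)`, that is, `∂ₖ∂ₘ log f`. -/
def mixedLogDeriv (k m : ℕ) (f : K) : K := partialDeriv k (partialLogDeriv m f)

lemma mixedLogDeriv_comm (k m : ℕ) (f : K) : mixedLogDeriv k m f = mixedLogDeriv m k f := by
  simp only [mixedLogDeriv, partialLogDeriv, Derivation.leibniz_div, smul_eq_mul,
    partialDeriv_comm k m]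
  ring

lemma mixedLogDeriv_inv (k m : ℕ) (f : K) : mixedLogDeriv k m f⁻¹ = -mixedLogDeriv k m f := by
  rw [mixedLogDeriv, mixedLogDeriv, partialLogDeriv_inv, map_neg]

lemma mixedLogDeriv_mul (k m : ℕ) (hf : f ≠ 0) (hg : g ≠ 0) :
    mixedLogDeriv k m (f * g) = mixedLogDeriv k m f + mixedLogDeriv k m g := by
  simp only [mixedLogDeriv, partialLogDeriv_mul m hf hg, map_add]

lemma mixedLogDeriv_eq_zero (hm : m ∉ Vars f) : mixedLogDeriv k m f = 0 := by
  rw [mixedLogDeriv, partialLogDeriv, notMem_Vars_iff.1 hm, zero_div, map_zero]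

lemma partialDeriv_partialDeriv_inv_ne_zero (hk : k ∈ Vars f) (hl : l ∈ Vars f)
    (h : partialDeriv k (partialDeriv l f) = 0) : partialDeriv k (partialDeriv l f⁻¹) ≠ 0 := by
  have hf := ne_zero_of_Vars_nonempty ⟨k, hk⟩
  rw [mem_Vars_iff] at hk hl
  have hinv : partialDeriv k (partialDeriv l f⁻¹) =
      2 * (partialDeriv k f * partialDeriv l f) / f ^ 3 := by
    simp only [Derivation.leibniz_inv, Derivation.leibniz, map_neg, h, pow_two, smul_eq_mul]
    field_simp
    ring
  rw [hinv]
  exact div_ne_zero (mul_ne_zero two_ne_zero (mul_ne_zero hk hl)) (pow_ne_zero 3 hf)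

end LogarithmicDerivatives

section NumeratorPositions

variable {f g h c s a b w : K} {i k l m : ℕ}

/-- The factorization `f = c * s` splits off the factor `s`: the cofactor `c` involves none of the
variables of `s`. -/
structure SplitsOff (f c s : K) : Prop where
  eq_mul : f = c * s
  cofactor_ne_zero : c ≠ 0
  disjoint_Vars : Disjoint (Vars s) (Vars c)

/-- The factorization `f = c * (a + b)` splits off a sum of two nonconstant summands in disjoint
variables. -/
structure SplitsOffSum (f c a b : K) : Prop extends SplitsOff f c (a + b) where
  disjoint_summands : Disjoint (Vars a) (Vars b)
  left_nonempty : (Vars a).Nonempty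
  right_nonempty : (Vars b).Nonempty

/-- The variable `xᵢ` is in numerator position in `f`: either `xᵢ` itself or a sum involving `xᵢ`
splits off from `f`. -/
def NumeratorPosition (f : K) (i : ℕ) : Prop :=
  (∃ c, SplitsOff f c (Xv i)) ∨ ∃ c a b, SplitsOffSum f c a b ∧ i ∈ Vars a

lemma SplitsOff.mixedLogDeriv_eq_zero (hf : SplitsOff f c s) (hk : k ∈ Vars s) (hm : m ∉ Vars s) :
    mixedLogDeriv k m f = 0 := by
  have hs := ne_zero_of_Vars_nonempty ⟨k, hk⟩
  rw [hf.eq_mul, mixedLogDeriv_mul k m hf.cofactor_ne_zero hs, _root_.mixedLogDeriv_eq_zero hm,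
    mixedLogDeriv_comm, _root_.mixedLogDeriv_eq_zero (Set.disjoint_left.1 hf.disjoint_Vars hk),
    add_zero]

namespace SplitsOffSum

lemma Vars_eq (hf : SplitsOffSum f c a b) : Vars (a + b) = Vars a ∪ Vars b :=
  Vars_add hf.disjoint_summands

lemma swap (hf : SplitsOffSum f c a b) : SplitsOffSum f c b a where
  toSplitsOff := by rw [add_comm]; exact hf.toSplitsOff
  disjoint_summands := hf.disjoint_summands.symm
  left_nonempty := hf.right_nonempty
  right_nonempty := hf.left_nonempty

lemma mem_Vars_left (hf : SplitsOffSum f c a b) (hk : k ∈ Vars a) : k ∈ Vars f := by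
  have hka : k ∈ Vars (a + b) := hf.Vars_eq ▸ Or.inl hk
  rw [mem_Vars_iff] at hka ⊢
  rw [hf.eq_mul, Derivation.leibniz, partialDeriv_eq_zero_of_disjoint hf.disjoint_Vars
    (mem_Vars_iff.2 hka), smul_zero, add_zero]
  exact mul_ne_zero hf.cofactor_ne_zero hka

lemma partialDeriv_partialDeriv_eq_zero (hf : SplitsOffSum f c a b) (hk : k ∈ Vars a)
    (hl : l ∈ Vars b) : partialDeriv k (partialDeriv l f) = 0 := by
  have hc {j} (hj : j ∈ Vars a ∪ Vars b) : partialDeriv j c = 0 :=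
    partialDeriv_eq_zero_of_disjoint hf.disjoint_Vars (hf.Vars_eq ▸ hj)
  have hkb := partialDeriv_eq_zero_of_disjoint hf.disjoint_summands hk
  have hla := partialDeriv_eq_zero_of_disjoint hf.disjoint_summands.symm hl
  have hlf : partialDeriv l f = c * partialDeriv l b := by
    simp [hf.eq_mul, hc (.inr hl), hla]
  simp [hlf, hc (.inl hk), partialDeriv_comm k l, hkb]

lemma mixedLogDeriv_ne_zero (hf : SplitsOffSum f c a b) (hk : k ∈ Vars a) (hl : l ∈ Vars b) :
    mixedLogDeriv k l f ≠ 0 := by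
  have hk' := hf.mem_Vars_left hk
  have hf0 := ne_zero_of_Vars_nonempty ⟨k, hk'⟩
  have hl' := hf.swap.mem_Vars_left hl
  rw [mem_Vars_iff] at hk' hl'
  have hlog : mixedLogDeriv k l f = -(partialDeriv k f * partialDeriv l f / f ^ 2) := by
    rw [mixedLogDeriv, partialLogDeriv, Derivation.leibniz_div,
      hf.partialDeriv_partialDeriv_eq_zero hk hl]
    simp only [smul_eq_mul]
    field_simp
    ring
  rw [hlog]
  exact neg_ne_zero.2 (div_ne_zero (mul_ne_zero hk' hl') (pow_ne_zero 2 hf0))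

/-- The graph on the variables with edges `mixedLogDeriv k m f ≠ 0` is connected on `Vars (a + b)`,
as it contains the complete bipartite graph between `Vars a` and `Vars b`. -/
lemma Vars_subset {W : Set ℕ} (hf : SplitsOffSum f c a b)
    (hW : ∀ k ∈ W, ∀ m ∉ W, mixedLogDeriv k m f = 0) (hi : i ∈ Vars a) (hiW : i ∈ W) :
    Vars (a + b) ⊆ W := by
  have hb : Vars b ⊆ W := fun l hl => by
    by_contra hlW
    exact hf.mixedLogDeriv_ne_zero hi hl (hW i hiW l hlW)
  obtain ⟨l, hl⟩ := hf.right_nonempty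
  have ha : Vars a ⊆ W := fun k hk => by
    by_contra hkW
    exact hf.swap.mixedLogDeriv_ne_zero hl hk (hW l (hb hl) k hkW)
  exact hf.Vars_eq ▸ Set.union_subset ha hb

lemma Vars_subset_of_inv {c' s : K} (hf : SplitsOffSum f c a b) (hf' : SplitsOff f⁻¹ c' s)
    (hi : i ∈ Vars a) (hi' : i ∈ Vars s) : Vars (a + b) ⊆ Vars s :=
  hf.Vars_subset (fun k hk m hm => by
    rw [← neg_eq_zero, ← mixedLogDeriv_inv]
    exact hf'.mixedLogDeriv_eq_zero hk hm) hi hi'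

end SplitsOffSum

lemma SplitsOff.partialLogDeriv_eq_inv (hf : SplitsOff f c (Xv i)) :
    partialLogDeriv i f = (Xv i)⁻¹ := by
  have hi : i ∈ Vars (Xv i) := by rw [Vars_Xv]; rfl
  rw [hf.eq_mul, partialLogDeriv_mul i hf.cofactor_ne_zero (Xv_ne_zero i), partialLogDeriv,
    partialDeriv_eq_zero_of_disjoint hf.disjoint_Vars hi, partialLogDeriv, partialDeriv_Xv,
    if_pos rfl, zero_div, zero_add, one_div]

lemma SplitsOff.not_splitsOff_inv_Xv (hf : SplitsOff f c (Xv i)) {c' : K} :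
    ¬ SplitsOff f⁻¹ c' (Xv i) := fun hf' => by
  have h := partialLogDeriv_inv i f
  rw [hf.partialLogDeriv_eq_inv, hf'.partialLogDeriv_eq_inv, self_eq_neg] at h
  exact inv_ne_zero (Xv_ne_zero i) h

lemma SplitsOffSum.not_splitsOff_inv_Xv (hf : SplitsOffSum f c a b) (hi : i ∈ Vars a) {c' : K} :
    ¬ SplitsOff f⁻¹ c' (Xv i) := fun hf' => by
  have hsub := hf.Vars_subset_of_inv hf' hi (by rw [Vars_Xv]; rfl)
  rw [hf.Vars_eq, Vars_Xv] at hsub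
  obtain ⟨l, hl⟩ := hf.right_nonempty
  obtain rfl : l = i := hsub (Or.inr hl)
  exact Set.disjoint_left.1 hf.disjoint_summands hi hl

lemma exists_separated_of_union_eq_union {α : Type*} {A B A' B' : Set α} (hA : A.Nonempty)
    (hB : B.Nonempty) (hA' : A'.Nonempty) (hB' : B'.Nonempty) (h : A ∪ B = A' ∪ B') :
    ∃ k ∈ A, ∃ l ∈ B, (k ∈ A' ∧ l ∈ B') ∨ (k ∈ B' ∧ l ∈ A') := by
  obtain ⟨k, hk⟩ := hA
  obtain ⟨l, hl⟩ := hB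
  obtain ⟨k', hk'⟩ := hA'
  obtain ⟨l', hl'⟩ := hB'
  have := Set.ext_iff.1 h
  simp only [Set.mem_union] at this
  grind

lemma SplitsOffSum.not_splitsOffSum_inv {c' a' b' : K} (hf : SplitsOffSum f c a b)
    (hi : i ∈ Vars a) (hi' : i ∈ Vars a') : ¬ SplitsOffSum f⁻¹ c' a' b' := fun hf' => by
  have hVars : Vars a ∪ Vars b = Vars a' ∪ Vars b' := by
    rw [← hf.Vars_eq, ← hf'.Vars_eq]
    refine (hf.Vars_subset_of_inv hf'.toSplitsOff hi (hf'.Vars_eq ▸ Or.inl hi')).antisymm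
      (hf'.Vars_subset_of_inv (c' := c) ?_ hi' (hf.Vars_eq ▸ Or.inl hi))
    rw [inv_inv]
    exact hf.toSplitsOff
  obtain ⟨k, hk, l, hl, h⟩ := exists_separated_of_union_eq_union hf.left_nonempty
    hf.right_nonempty hf'.left_nonempty hf'.right_nonempty hVars
  refine partialDeriv_partialDeriv_inv_ne_zero (hf.mem_Vars_left hk) (hf.swap.mem_Vars_left hl)
    (hf.partialDeriv_partialDeriv_eq_zero hk hl) ?_
  rcases h with ⟨hk', hl'⟩ | ⟨hk', hl'⟩
  · exact hf'.partialDeriv_partialDeriv_eq_zero hk' hl'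
  · exact hf'.swap.partialDeriv_partialDeriv_eq_zero hk' hl'

lemma NumeratorPosition.not_inv (hf : NumeratorPosition f i) : ¬ NumeratorPosition f⁻¹ i := by
  rintro (⟨c', hf'⟩ | ⟨c', a', b', hf', hi'⟩) <;> rcases hf with ⟨c, hf⟩ | ⟨c, a, b, hf, hi⟩
  · exact hf.not_splitsOff_inv_Xv hf'
  · exact hf.not_splitsOff_inv_Xv hi hf'
  · rw [← inv_inv f] at hf
    exact hf'.not_splitsOff_inv_Xv hi' hf
  · exact hf.not_splitsOffSum_inv hi hi' hf'

lemma SplitsOff.mul (hf : SplitsOff f c s) (hw : w ≠ 0) (d : Disjoint (Vars f) (Vars w)) :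
    SplitsOff (f * w) (c * w) s where
  eq_mul := by rw [hf.eq_mul]; ring
  cofactor_ne_zero := mul_ne_zero hf.cofactor_ne_zero hw
  disjoint_Vars := Set.disjoint_left.2 fun k hk => by
    have hc := partialDeriv_eq_zero_of_disjoint hf.disjoint_Vars hk
    have hkf : k ∈ Vars f := by
      rw [mem_Vars_iff] at hk ⊢
      simpa [hf.eq_mul, hc] using ⟨hf.cofactor_ne_zero, hk⟩
    rw [notMem_Vars_iff, Derivation.leibniz, hc, partialDeriv_eq_zero_of_disjoint d hkf, smul_zero,
      smul_zero, add_zero]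

lemma NumeratorPosition.mul (hf : NumeratorPosition f i) (hw : w ≠ 0)
    (d : Disjoint (Vars f) (Vars w)) : NumeratorPosition (f * w) i := by
  rcases hf with ⟨c, hf⟩ | ⟨c, a, b, hf, hi⟩
  · exact .inl ⟨_, hf.mul hw d⟩
  · exact .inr ⟨_, a, b, { hf with toSplitsOff := hf.toSplitsOff.mul hw d }, hi⟩

/-- Every variable of `f` is in numerator position; this characterizes the expressions that do not
end with a division. -/
def IsPureNumerator (f : K) : Prop := ∀ i ∈ Vars f, NumeratorPosition f i

lemma splitsOff_one (s : K) : SplitsOff s 1 s where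
  eq_mul := (one_mul s).symm
  cofactor_ne_zero := one_ne_zero
  disjoint_Vars := Vars_one ▸ Set.disjoint_empty _

namespace IsPureNumerator

lemma of_Xv (i : ℕ) : IsPureNumerator (Xv i) := fun j hj => by
  rw [Vars_Xv] at hj
  obtain rfl : j = i := hj
  exact .inl ⟨1, splitsOff_one _⟩

lemma add (hg : (Vars g).Nonempty) (hh : (Vars h).Nonempty) (d : Disjoint (Vars g) (Vars h)) :
    IsPureNumerator (g + h) := fun i hi => by
  have hsum : SplitsOffSum (g + h) 1 g h :=
    { splitsOff_one (g + h) with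
      disjoint_summands := d
      left_nonempty := hg
      right_nonempty := hh }
  rw [Vars_add d] at hi
  rcases hi with hi | hi
  · exact .inr ⟨_, _, _, hsum, hi⟩
  · exact .inr ⟨_, _, _, hsum.swap, hi⟩

lemma sub (hg : (Vars g).Nonempty) (hh : (Vars h).Nonempty) (d : Disjoint (Vars g) (Vars h)) :
    IsPureNumerator (g - h) := by
  rw [← Vars_neg h] at hh d
  exact sub_eq_add_neg g h ▸ add hg hh d

lemma neg (hf : IsPureNumerator f) : IsPureNumerator (-f) := fun i hi => by
  rw [Vars_neg] at hi
  have hone : Vars (-1) = ∅ := (Vars_neg 1).trans Vars_one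
  have := (hf i hi).mul (neg_ne_zero.2 one_ne_zero) (hone ▸ Set.disjoint_empty _)
  rwa [mul_neg_one] at this

lemma mul (hg : IsPureNumerator g) (hh : IsPureNumerator h) (hg0 : g ≠ 0) (hh0 : h ≠ 0)
    (d : Disjoint (Vars g) (Vars h)) : IsPureNumerator (g * h) := fun i hi => by
  rw [Vars_mul d hg0 hh0] at hi
  rcases hi with hi | hi
  · exact (hg i hi).mul hh0 d
  · exact mul_comm h g ▸ (hh i hi).mul hg0 d.symm

lemma numeratorPosition_div (hg : IsPureNumerator g) (hh0 : h ≠ 0)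
    (d : Disjoint (Vars g) (Vars h)) (hi : i ∈ Vars g) : NumeratorPosition (g / h) i := by
  rw [div_eq_mul_inv]
  exact (hg i hi).mul (inv_ne_zero hh0) (by rwa [Vars_inv])

lemma numeratorPosition_inv_div (hh : IsPureNumerator h) (hg0 : g ≠ 0)
    (d : Disjoint (Vars g) (Vars h)) (hi : i ∈ Vars h) : NumeratorPosition (g / h)⁻¹ i := by
  rw [inv_div]
  exact hh.numeratorPosition_div hg0 d.symm hi

lemma not_div (hh : IsPureNumerator h) (hg0 : g ≠ 0) (hh0 : (Vars h).Nonempty)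
    (d : Disjoint (Vars g) (Vars h)) : ¬ IsPureNumerator (g / h) := fun hgh => by
  obtain ⟨i, hi⟩ := hh0
  have hi' : i ∈ Vars (g / h) := Vars_div d hg0 (ne_zero_of_Vars_nonempty ⟨i, hi⟩) ▸ Or.inr hi
  exact (hgh i hi').not_inv (hh.numeratorPosition_inv_div hg0 d hi)

end IsPureNumerator

lemma EndsWith.isPureNumerator {o : Op} (hf : EndsWith f o) (ho : o ≠ Op.div) :
    IsPureNumerator f := by
  induction hf with
  | var i => exact .of_Xv i
  | add_base hij =>
    exact .add (IsAE.var _).Vars_nonempty (IsAE.var _).Vars_nonempty (disjoint_Vars_Xv.2 hij)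
  | sub_base hij =>
    exact .sub (IsAE.var _).Vars_nonempty (IsAE.var _).Vars_nonempty (disjoint_Vars_Xv.2 hij)
  | mul_base hij =>
    exact .mul (.of_Xv _) (.of_Xv _) (Xv_ne_zero _) (Xv_ne_zero _) (disjoint_Vars_Xv.2 hij)
  | div_base | div_rec => exact absurd rfl ho
  | add_rec hg hh d => exact .add hg.Vars_nonempty hh.Vars_nonempty d
  | sub_rec hg hh d => exact .sub hg.Vars_nonempty hh.Vars_nonempty d
  | mul_rec hg hh d _ ho₁ ho₂ _ _ ihg ihh =>
    exact .mul (ihg ho₁) (ihh ho₂) hg.ne_zero hh.ne_zero d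

end NumeratorPositions

section UniquenessOfQuotients

variable {g h g' h' : K}

/-- As no variable is in numerator position both in a function and in its inverse, the variables of
`g` are those of `g'`, and `g / g' = h / h'` depends neither on these nor on the others. -/
lemma exists_eq_C_mul_of_div_eq_div (hg : IsPureNumerator g) (hh : IsPureNumerator h)
    (hg' : IsPureNumerator g') (hh' : IsPureNumerator h') (hg0 : g ≠ 0) (hh0 : h ≠ 0)
    (hg0' : g' ≠ 0) (hh0' : h' ≠ 0) (d : Disjoint (Vars g) (Vars h))
    (d' : Disjoint (Vars g') (Vars h')) (heq : g / h = g' / h') :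
    ∃ c : ℝ, g = toK (C c) * g' := by
  have hVars : Vars g ∪ Vars h = Vars g' ∪ Vars h' := by
    rw [← Vars_div d hg0 hh0, heq, Vars_div d' hg0' hh0']
  have hgh' : Disjoint (Vars g) (Vars h') := Set.disjoint_left.2 fun i hi hi' =>
    (hg.numeratorPosition_div hh0 d hi).not_inv
      (heq ▸ hh'.numeratorPosition_inv_div hg0' d' hi')
  have hg'h : Disjoint (Vars g') (Vars h) := Set.disjoint_left.2 fun i hi hi' =>
    (hg'.numeratorPosition_div hh0' d' hi).not_inv
      (heq ▸ hh.numeratorPosition_inv_div hg0 d hi')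
  have hratio : g / g' = h / h' := by
    field_simp at heq ⊢
    exact heq
  have hconst : Vars (g / g') = ∅ := Set.eq_empty_of_forall_notMem fun k => by
    rw [notMem_Vars_iff]
    by_cases hk : k ∈ Vars g
    · rw [hratio, Derivation.leibniz_div, partialDeriv_eq_zero_of_disjoint d hk,
        partialDeriv_eq_zero_of_disjoint hgh' hk]
      simp
    · have hk' : k ∉ Vars g' := fun hk' => Set.disjoint_left.1 hg'h hk'
        ((hVars.symm ▸ Or.inl hk' : k ∈ Vars g ∪ Vars h).resolve_left hk)
      rw [Derivation.leibniz_div, notMem_Vars_iff.1 hk, notMem_Vars_iff.1 hk']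
      simp
  obtain ⟨c, hc⟩ := exists_eq_toK_C_of_Vars_eq_empty hconst
  exact ⟨c, (div_eq_iff hg0').1 hc⟩

end UniquenessOfQuotients

section EveryExpressionEnds

variable {f g h p q : K} {s : Set Op} {o : Op}

lemma EndsIn.isAE (hf : EndsIn f s) : IsAE f := by
  obtain ⟨o, -, hf⟩ := hf
  exact hf.isAE

lemma endsIn_Xv (hs : Op.mul ∈ s) (i : ℕ) : EndsIn (Xv i) s := ⟨_, hs, .var i⟩

lemma three_le_ncard_Vars_union_or_eq_Xv (hg : IsAE g) (hh : IsAE h)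
    (d : Disjoint (Vars g) (Vars h)) :
    3 ≤ (Vars g ∪ Vars h).ncard ∨ ∃ i j, i ≠ j ∧ g = Xv i ∧ h = Xv j := by
  rw [hg.ncard_Vars_union hh d]
  by_contra! hlt
  have hg1 := hg.ncard_Vars_pos
  have hh1 := hh.ncard_Vars_pos
  obtain ⟨i, rfl⟩ := hg.exists_eq_Xv (by lia)
  obtain ⟨j, rfl⟩ := hh.exists_eq_Xv (by lia)
  exact hlt.2 i j (disjoint_Vars_Xv.1 d) rfl rfl

lemma EndsWith.add_of_endsIn (hg : EndsIn g {Op.sub}ᶜ) (hh : EndsIn h {Op.sub}ᶜ)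
    (d : Disjoint (Vars g) (Vars h)) : EndsWith (g + h) Op.add := by
  rcases three_le_ncard_Vars_union_or_eq_Xv hg.isAE hh.isAE d with h3 | ⟨i, j, hij, rfl, rfl⟩
  · obtain ⟨⟨o, ho, hg⟩, o', ho', hh⟩ := hg, hh
    exact .add_rec hg.isAE hh.isAE d (by rwa [Vars_add d]) ho ho' hg hh
  · exact .add_base hij

lemma EndsWith.sub_of_endsIn (hg : EndsIn g {Op.sub}ᶜ) (hh : EndsIn h {Op.sub}ᶜ)
    (d : Disjoint (Vars g) (Vars h)) (hfirst : FirstType h) : EndsWith (g - h) Op.sub := by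
  rcases three_le_ncard_Vars_union_or_eq_Xv hg.isAE hh.isAE d with h3 | ⟨i, j, hij, rfl, rfl⟩
  · obtain ⟨⟨o, ho, hg⟩, o', ho', hh⟩ := hg, hh
    exact .sub_rec hg.isAE hh.isAE d (by rwa [Vars_sub d]) ho ho' hfirst hg hh
  · exact .sub_base hij

lemma EndsWith.mul_of_endsIn (hg : EndsIn g {Op.div}ᶜ) (hh : EndsIn h {Op.div}ᶜ)
    (d : Disjoint (Vars g) (Vars h)) : EndsWith (g * h) Op.mul := by
  rcases three_le_ncard_Vars_union_or_eq_Xv hg.isAE hh.isAE d with h3 | ⟨i, j, hij, rfl, rfl⟩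
  · obtain ⟨⟨o, ho, hg⟩, o', ho', hh⟩ := hg, hh
    exact .mul_rec hg.isAE hh.isAE d
      (by rwa [Vars_mul d hg.isAE.ne_zero hh.isAE.ne_zero]) ho ho' hg hh
  · exact .mul_base hij

lemma EndsWith.div_of_endsIn (hg : EndsIn g {Op.div}ᶜ) (hh : EndsIn h {Op.div}ᶜ)
    (d : Disjoint (Vars g) (Vars h)) : EndsWith (g / h) Op.div := by
  rcases three_le_ncard_Vars_union_or_eq_Xv hg.isAE hh.isAE d with h3 | ⟨i, j, hij, rfl, rfl⟩
  · obtain ⟨⟨o, ho, hg⟩, o', ho', hh⟩ := hg, hh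
    exact .div_rec hg.isAE hh.isAE d
      (by rwa [Vars_div d hg.isAE.ne_zero hh.isAE.ne_zero]) ho ho' hg hh
  · exact .div_base hij

lemma EndsWith.exists_eq_sub (hf : EndsWith f Op.sub) : ∃ p q, EndsIn p {Op.sub}ᶜ ∧
    EndsIn q {Op.sub}ᶜ ∧ FirstType q ∧ Disjoint (Vars p) (Vars q) ∧ f = p - q := by
  cases hf with
  | sub_base hij =>
    exact ⟨_, _, endsIn_Xv (by simp) _, endsIn_Xv (by simp) _, firstType_Xv _,
      disjoint_Vars_Xv.2 hij, rfl⟩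
  | sub_rec _ _ d _ hp hq hfirst hp' hq' =>
    exact ⟨_, _, ⟨_, hp, hp'⟩, ⟨_, hq, hq'⟩, hfirst, d, rfl⟩

lemma EndsWith.exists_eq_div (hf : EndsWith f Op.div) : ∃ p q, EndsIn p {Op.div}ᶜ ∧
    EndsIn q {Op.div}ᶜ ∧ Disjoint (Vars p) (Vars q) ∧ f = p / q := by
  cases hf with
  | div_base hij =>
    exact ⟨_, _, endsIn_Xv (by simp) _, endsIn_Xv (by simp) _, disjoint_Vars_Xv.2 hij, rfl⟩
  | div_rec _ _ d _ hp hq hp' hq' => exact ⟨_, _, ⟨_, hp, hp'⟩, ⟨_, hq, hq'⟩, d, rfl⟩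

lemma disjoint_union_union_comm {α : Type*} {A B A' B' : Set α} (h : Disjoint A B)
    (h' : Disjoint A' B') (d : Disjoint (A ∪ B) (A' ∪ B')) : Disjoint (A ∪ A') (B ∪ B') := by
  simp only [Set.disjoint_union_left, Set.disjoint_union_right] at d ⊢
  exact ⟨⟨h, d.1.2.symm⟩, d.2.1, h'⟩

/-- A possible subtrahend of a difference form: `0`, or an expression not ending with `-`. -/
def IsSubtrahend (q : K) : Prop := q = 0 ∨ EndsIn q {Op.sub}ᶜ

/-- `f` is a difference of parts in disjoint variables not ending with `-`, the second of which
may be missing. -/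
def HasDifferenceForm (f : K) : Prop :=
  ∃ p q, EndsIn p {Op.sub}ᶜ ∧ IsSubtrahend q ∧ Disjoint (Vars p) (Vars q) ∧ f = p - q

lemma EndsIn.add_isSubtrahend (hp : EndsIn p {Op.sub}ᶜ) (hq : IsSubtrahend q)
    (d : Disjoint (Vars p) (Vars q)) : EndsIn (p + q) {Op.sub}ᶜ := by
  rcases hq with rfl | hq
  · rwa [add_zero]
  · exact ⟨_, by simp, .add_of_endsIn hp hq d⟩

lemma IsSubtrahend.add (hp : IsSubtrahend p) (hq : IsSubtrahend q)
    (d : Disjoint (Vars p) (Vars q)) : IsSubtrahend (p + q) := by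
  rcases hp with rfl | hp
  · rwa [zero_add]
  · exact .inr (hp.add_isSubtrahend hq d)

lemma EndsWith.hasDifferenceForm (hf : EndsWith f o) : HasDifferenceForm f := by
  by_cases ho : o = Op.sub
  · obtain ⟨p, q, hp, hq, -, d, rfl⟩ := exists_eq_sub (ho ▸ hf)
    exact ⟨p, q, hp, .inr hq, d, rfl⟩
  · exact ⟨f, 0, ⟨o, ho, hf⟩, .inl rfl, Vars_zero ▸ Set.disjoint_empty _, (sub_zero f).symm⟩

namespace HasDifferenceForm

lemma add (hg : HasDifferenceForm g) (hh : HasDifferenceForm h) (d : Disjoint (Vars g) (Vars h)) :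
    HasDifferenceForm (g + h) := by
  obtain ⟨p, q, hp, hq, dpq, rfl⟩ := hg
  obtain ⟨p', q', hp', hq', dpq', rfl⟩ := hh
  rw [Vars_sub dpq, Vars_sub dpq'] at d
  have dpp' := d.mono Set.subset_union_left Set.subset_union_left
  have dqq' := d.mono Set.subset_union_right Set.subset_union_right
  refine ⟨p + p', q + q', hp.add_isSubtrahend (.inr hp') dpp', hq.add hq' dqq', ?_, by ring⟩
  rw [Vars_add dpp', Vars_add dqq']
  exact disjoint_union_union_comm dpq dpq' d

lemma sub (hg : HasDifferenceForm g) (hh : HasDifferenceForm h) (d : Disjoint (Vars g) (Vars h)) :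
    HasDifferenceForm (g - h) := by
  obtain ⟨p, q, hp, hq, dpq, rfl⟩ := hg
  obtain ⟨p', q', hp', hq', dpq', rfl⟩ := hh
  rw [Vars_sub dpq, Vars_sub dpq', Set.union_comm (Vars p')] at d
  have dpq'' := d.mono Set.subset_union_left Set.subset_union_left
  have dqp' := d.mono Set.subset_union_right Set.subset_union_right
  refine ⟨p + q', q + p', hp.add_isSubtrahend hq' dpq'', hq.add (.inr hp') dqp', ?_, by ring⟩
  rw [Vars_add dpq'', Vars_add dqp']
  exact disjoint_union_union_comm dpq dpq'.symm d

/-- If the subtrahend `q` is not of the first type, then `-q` is a smaller expression, hence a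
difference `p' - q'` with `q'` zero or of the first type, and `p - q = (p + p') - q'`. -/
lemma exists_endsWith (hf : HasDifferenceForm f)
    (ih : ∀ g, IsAE g → (Vars g).ncard < (Vars f).ncard → ∃ o, EndsWith g o) :
    ∃ o, EndsWith f o := by
  obtain ⟨p, q, hp, hq | hq, d, rfl⟩ := hf
  · obtain ⟨o, -, hp⟩ := hp
    exact ⟨o, by rwa [hq, sub_zero]⟩
  by_cases hfirst : IsAE (-q)
  · obtain ⟨o, ho⟩ := ih (-q) hfirst <| by
      rw [Vars_neg, Vars_sub d, hp.isAE.ncard_Vars_union hq.isAE d]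
      exact Nat.lt_add_of_pos_left hp.isAE.ncard_Vars_pos
    rw [← Vars_neg q] at d
    rw [sub_eq_add_neg]
    by_cases hsub : o = Op.sub
    · obtain ⟨p', q', hp', hq', hfirst', d', hpq'⟩ := EndsWith.exists_eq_sub (hsub ▸ ho)
      rw [hpq'] at d ⊢
      rw [Vars_sub d'] at d
      have dpp' := d.mono_right Set.subset_union_left
      rw [← add_sub_assoc]
      refine ⟨_, .sub_of_endsIn (hp.add_isSubtrahend (.inr hp') dpp') hq' ?_ hfirst'⟩
      rw [Vars_add dpp']
      exact Disjoint.sup_left (d.mono_right Set.subset_union_right) d'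
    · exact ⟨_, .add_of_endsIn hp ⟨o, hsub, ho⟩ d⟩
  · exact ⟨_, .sub_of_endsIn hp hq d ⟨hq.isAE, hfirst⟩⟩

end HasDifferenceForm

/-- A possible divisor of a quotient form: `1`, or an expression not ending with `÷`. -/
def IsDivisor (q : K) : Prop := q = 1 ∨ EndsIn q {Op.div}ᶜ

/-- `f` is a quotient of parts in disjoint variables not ending with `÷`, the second of which may
be missing. -/
def HasQuotientForm (f : K) : Prop :=
  ∃ p q, EndsIn p {Op.div}ᶜ ∧ IsDivisor q ∧ Disjoint (Vars p) (Vars q) ∧ f = p / q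

lemma IsDivisor.ne_zero (hq : IsDivisor q) : q ≠ 0 := by
  rcases hq with rfl | hq
  · exact one_ne_zero
  · exact hq.isAE.ne_zero

lemma EndsIn.mul_isDivisor (hp : EndsIn p {Op.div}ᶜ) (hq : IsDivisor q)
    (d : Disjoint (Vars p) (Vars q)) : EndsIn (p * q) {Op.div}ᶜ := by
  rcases hq with rfl | hq
  · rwa [mul_one]
  · exact ⟨_, by simp, .mul_of_endsIn hp hq d⟩

lemma IsDivisor.mul (hp : IsDivisor p) (hq : IsDivisor q)
    (d : Disjoint (Vars p) (Vars q)) : IsDivisor (p * q) := by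
  rcases hp with rfl | hp
  · rwa [one_mul]
  · exact .inr (hp.mul_isDivisor hq d)

lemma EndsWith.hasQuotientForm (hf : EndsWith f o) : HasQuotientForm f := by
  by_cases ho : o = Op.div
  · obtain ⟨p, q, hp, hq, d, rfl⟩ := exists_eq_div (ho ▸ hf)
    exact ⟨p, q, hp, .inr hq, d, rfl⟩
  · exact ⟨f, 1, ⟨o, ho, hf⟩, .inl rfl, Vars_one ▸ Set.disjoint_empty _, (div_one f).symm⟩

namespace HasQuotientForm

lemma mul (hg : HasQuotientForm g) (hh : HasQuotientForm h) (d : Disjoint (Vars g) (Vars h)) :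
    HasQuotientForm (g * h) := by
  obtain ⟨p, q, hp, hq, dpq, rfl⟩ := hg
  obtain ⟨p', q', hp', hq', dpq', rfl⟩ := hh
  rw [Vars_div dpq hp.isAE.ne_zero hq.ne_zero, Vars_div dpq' hp'.isAE.ne_zero hq'.ne_zero] at d
  have dpp' := d.mono Set.subset_union_left Set.subset_union_left
  have dqq' := d.mono Set.subset_union_right Set.subset_union_right
  refine ⟨p * p', q * q', hp.mul_isDivisor (.inr hp') dpp', hq.mul hq' dqq', ?_,
    div_mul_div_comm ..⟩
  rw [Vars_mul dpp' hp.isAE.ne_zero hp'.isAE.ne_zero, Vars_mul dqq' hq.ne_zero hq'.ne_zero]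
  exact disjoint_union_union_comm dpq dpq' d

lemma div (hg : HasQuotientForm g) (hh : HasQuotientForm h) (d : Disjoint (Vars g) (Vars h)) :
    HasQuotientForm (g / h) := by
  obtain ⟨p, q, hp, hq, dpq, rfl⟩ := hg
  obtain ⟨p', q', hp', hq', dpq', rfl⟩ := hh
  rw [Vars_div dpq hp.isAE.ne_zero hq.ne_zero, Vars_div dpq' hp'.isAE.ne_zero hq'.ne_zero,
    Set.union_comm (Vars p')] at d
  have dpq'' := d.mono Set.subset_union_left Set.subset_union_left
  have dqp' := d.mono Set.subset_union_right Set.subset_union_right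
  refine ⟨p * q', q * p', hp.mul_isDivisor hq' dpq'', hq.mul (.inr hp') dqp', ?_,
    div_div_div_eq ..⟩
  rw [Vars_mul dpq'' hp.isAE.ne_zero hq'.ne_zero, Vars_mul dqp' hq.ne_zero hp'.isAE.ne_zero]
  exact disjoint_union_union_comm dpq dpq'.symm d

lemma exists_endsWith (hf : HasQuotientForm f) : ∃ o, EndsWith f o := by
  obtain ⟨p, q, hp, hq | hq, d, rfl⟩ := hf
  · obtain ⟨o, -, hp⟩ := hp
    exact ⟨o, by rwa [hq, div_one]⟩
  · exact ⟨_, .div_of_endsIn hp hq d⟩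

end HasQuotientForm

lemma IsAE.exists_endsWith (hf : IsAE f) : ∃ o, EndsWith f o := by
  induction hcard : (Vars f).ncard using Nat.strong_induction_on generalizing f with
  | _ n ih =>
  have ih' : ∀ g, IsAE g → (Vars g).ncard < (Vars f).ncard → ∃ o, EndsWith g o :=
    fun g hg hlt => ih _ (hcard ▸ hlt) hg rfl
  rcases hf.exists_applyOp with ⟨i, rfl⟩ | ⟨o, g, h, hg, hh, d, hVars, rfl⟩
  · exact ⟨_, .var i⟩
  have hlt := hVars ▸ hg.ncard_Vars_union hh d
  obtain ⟨og, hog⟩ := ih' g hg (by have := hh.ncard_Vars_pos; lia)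
  obtain ⟨oh, hoh⟩ := ih' h hh (by have := hg.ncard_Vars_pos; lia)
  cases o with
  | add => exact (hog.hasDifferenceForm.add hoh.hasDifferenceForm d).exists_endsWith ih'
  | sub => exact (hog.hasDifferenceForm.sub hoh.hasDifferenceForm d).exists_endsWith ih'
  | mul => exact (hog.hasQuotientForm.mul hoh.hasQuotientForm d).exists_endsWith
  | div => exact (hog.hasQuotientForm.div hoh.hasQuotientForm d).exists_endsWith

lemma IsAE.endsIn_compl_div_or_exists_eq_div (hf : IsAE f) : EndsIn f {Op.div}ᶜ ∨
    ∃ p q, EndsIn p {Op.div}ᶜ ∧ EndsIn q {Op.div}ᶜ ∧ Disjoint (Vars p) (Vars q) ∧ f = p / q := by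
  obtain ⟨o, ho⟩ := hf.exists_endsWith
  by_cases hdiv : o = Op.div
  · exact .inr (EndsWith.exists_eq_div (hdiv ▸ ho))
  · exact .inl ⟨o, hdiv, ho⟩

lemma EndsIn.isPureNumerator (hf : EndsIn f {Op.div}ᶜ) : IsPureNumerator f := by
  obtain ⟨o, ho, hf⟩ := hf
  exact hf.isPureNumerator ho

lemma IsAE.endsIn_compl_div_iff (hf : IsAE f) : EndsIn f {Op.div}ᶜ ↔ IsPureNumerator f := by
  refine ⟨EndsIn.isPureNumerator, fun hpure => ?_⟩
  rcases hf.endsIn_compl_div_or_exists_eq_div with h | ⟨p, q, hp, hq, d, rfl⟩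
  · exact h
  · exact absurd hpure (hq.isPureNumerator.not_div hp.isAE.ne_zero hq.isAE.Vars_nonempty d)

lemma EndsIn.neg (hf : EndsIn f {Op.div}ᶜ) (hneg : IsAE (-f)) : EndsIn (-f) {Op.div}ᶜ :=
  hneg.endsIn_compl_div_iff.2 hf.isPureNumerator.neg

lemma EndsWith.isAE_neg (hf : EndsWith f Op.sub) : IsAE (-f) := by
  obtain ⟨p, q, hp, hq, -, d, rfl⟩ := hf.exists_eq_sub
  rw [neg_sub]
  exact .sub hq.isAE hp.isAE d.symm

lemma add_sub_mul_eq_compl_div : ({Op.add, Op.sub, Op.mul} : Set Op) = {Op.div}ᶜ := by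
  ext o
  cases o <;> simp

lemma Fset_add_mul_eq : Fset {Op.add, Op.mul} = Fset {Op.div}ᶜ := by
  ext f
  refine and_congr_right fun hfirst => exists_congr fun o => and_congr_left fun ho => ?_
  cases o with
  | sub => exact absurd ho.isAE_neg hfirst.2
  | _ => simp

end EveryExpressionEnds

section QuotientTypes

lemma div_right_inj_of_ne_zero {G₀ : Type*} [GroupWithZero G₀] {a b c : G₀} (ha : a ≠ 0) :
    a / b = a / c ↔ b = c := by
  rw [div_eq_mul_inv, div_eq_mul_inv, mul_right_inj' ha, inv_inj]

variable {g h g' h' : K}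

lemma eq_or_eq_neg_of_div_eq_or_div_eq_neg (hg : EndsIn g {Op.div}ᶜ) (hh : EndsIn h {Op.div}ᶜ)
    (hg' : EndsIn g' {Op.div}ᶜ) (hh' : EndsIn h' {Op.div}ᶜ) (d : Disjoint (Vars g) (Vars h))
    (d' : Disjoint (Vars g') (Vars h')) (heq : g / h = g' / h' ∨ g / h = -(g' / h')) :
    g = g' ∨ g = -g' := by
  obtain ⟨c, hc⟩ : ∃ c : ℝ, g = toK (C c) * g' := by
    rcases heq with heq | heq
    · exact exists_eq_C_mul_of_div_eq_div hg.isPureNumerator hh.isPureNumerator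
        hg'.isPureNumerator hh'.isPureNumerator hg.isAE.ne_zero hh.isAE.ne_zero
        hg'.isAE.ne_zero hh'.isAE.ne_zero d d' heq
    · obtain ⟨c, hc⟩ := exists_eq_C_mul_of_div_eq_div hg.isPureNumerator hh.isPureNumerator
        hg'.isPureNumerator.neg hh'.isPureNumerator hg.isAE.ne_zero hh.isAE.ne_zero
        (neg_ne_zero.2 hg'.isAE.ne_zero) hh'.isAE.ne_zero d (by rwa [Vars_neg])
        (heq.trans (neg_div ..).symm)
      exact ⟨-c, by rw [hc, map_neg, map_neg, mul_neg, neg_mul]⟩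
  exact hg.isAE.eq_or_eq_neg_of_eq_C_mul hg'.isAE hc

lemma div_eq_div_iff_of_endsIn (hg : EndsIn g {Op.div}ᶜ) (hh : EndsIn h {Op.div}ᶜ)
    (hg' : EndsIn g' {Op.div}ᶜ) (hh' : EndsIn h' {Op.div}ᶜ) (d : Disjoint (Vars g) (Vars h))
    (d' : Disjoint (Vars g') (Vars h')) :
    g / h = g' / h' ↔ g = g' ∧ h = h' ∨ g = -g' ∧ h = -h' := by
  have hg0 := hg'.isAE.ne_zero
  constructor
  · intro heq
    rcases eq_or_eq_neg_of_div_eq_or_div_eq_neg hg hh hg' hh' d d' (.inl heq) with rfl | rfl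
    · exact .inl ⟨rfl, (div_right_inj_of_ne_zero hg0).1 heq⟩
    · rw [← neg_div_neg_eq g', div_right_inj_of_ne_zero (neg_ne_zero.2 hg0)] at heq
      exact .inr ⟨rfl, heq⟩
  · rintro (⟨rfl, rfl⟩ | ⟨rfl, rfl⟩)
    · rfl
    · exact neg_div_neg_eq ..

lemma div_eq_neg_div_iff_of_endsIn (hg : EndsIn g {Op.div}ᶜ) (hh : EndsIn h {Op.div}ᶜ)
    (hg' : EndsIn g' {Op.div}ᶜ) (hh' : EndsIn h' {Op.div}ᶜ) (d : Disjoint (Vars g) (Vars h))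
    (d' : Disjoint (Vars g') (Vars h')) :
    g / h = -(g' / h') ↔ g = -g' ∧ h = h' ∨ g = g' ∧ h = -h' := by
  have hg0 := hg'.isAE.ne_zero
  constructor
  · intro heq
    rcases eq_or_eq_neg_of_div_eq_or_div_eq_neg hg hh hg' hh' d d' (.inr heq) with rfl | rfl
    · rw [← div_neg, div_right_inj_of_ne_zero hg0] at heq
      exact .inr ⟨rfl, heq⟩
    · rw [← neg_div, div_right_inj_of_ne_zero (neg_ne_zero.2 hg0)] at heq
      exact .inl ⟨rfl, heq⟩
  · rintro (⟨rfl, rfl⟩ | ⟨rfl, rfl⟩)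
    · exact neg_div ..
    · exact div_neg ..

lemma isAE_neg_div_iff (hg : EndsIn g {Op.div}ᶜ) (hh : EndsIn h {Op.div}ᶜ)
    (d : Disjoint (Vars g) (Vars h)) : IsAE (-(g / h)) ↔ IsAE (-g) ∨ IsAE (-h) := by
  constructor
  · intro hneg
    rcases hneg.endsIn_compl_div_or_exists_eq_div with hpure | ⟨p, q, hp, hq, dpq, heq⟩
    · have hdiv := hpure.isPureNumerator.neg
      rw [neg_neg] at hdiv
      exact absurd hdiv
        (hh.isPureNumerator.not_div hg.isAE.ne_zero hh.isAE.Vars_nonempty d)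
    · rcases (div_eq_neg_div_iff_of_endsIn hp hq hg hh dpq d).1 heq.symm with
        ⟨rfl, -⟩ | ⟨-, rfl⟩
      · exact .inl hp.isAE
      · exact .inr hq.isAE
  · rintro (hneg | hneg)
    · rw [← neg_div]
      exact .div hneg hh.isAE (by rwa [Vars_neg])
    · rw [← div_neg]
      exact .div hg.isAE hneg (by rwa [Vars_neg])

lemma iso_div_iff (hg : EndsIn g {Op.div}ᶜ) (hh : EndsIn h {Op.div}ᶜ)
    (hg' : EndsIn g' {Op.div}ᶜ) (hh' : EndsIn h' {Op.div}ᶜ) (d : Disjoint (Vars g) (Vars h))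
    (d' : Disjoint (Vars g') (Vars h')) :
    Iso (g / h) (g' / h') ↔ Iso g g' ∧ Iso h h' ∨ Iso g (-g') ∧ Iso h (-h') := by
  constructor
  · rintro ⟨σ, heq⟩
    rw [map_div₀, div_eq_div_iff_of_endsIn (Iso.endsIn ⟨σ, rfl⟩ hg) (Iso.endsIn ⟨σ, rfl⟩ hh)
      hg' hh' (disjoint_Vars_permAct σ d) d'] at heq
    exact heq.imp (And.imp (⟨σ, ·⟩) (⟨σ, ·⟩)) (And.imp (⟨σ, ·⟩) (⟨σ, ·⟩))
  · rintro (⟨hgg', hhh'⟩ | ⟨hgg', hhh'⟩)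
    · obtain ⟨ρ, rfl, rfl⟩ := Iso.exists_perm_of_disjoint hg.isAE hh.isAE d d' hgg' hhh'
      exact ⟨ρ, map_div₀ ..⟩
    · obtain ⟨ρ, hρg, hρh⟩ := Iso.exists_perm_of_disjoint hg.isAE hh.isAE d
        (by rwa [Vars_neg, Vars_neg]) hgg' hhh'
      exact ⟨ρ, by rw [map_div₀, hρg, hρh, neg_div_neg_eq]⟩

lemma iso_neg_div_iff (hg : EndsIn g {Op.div}ᶜ) (hh : EndsIn h {Op.div}ᶜ)
    (d : Disjoint (Vars g) (Vars h)) :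
    Iso (g / h) (-(g / h)) ↔ Iso g (-g) ∨ Iso h (-h) := by
  constructor
  · rintro ⟨σ, heq⟩
    rw [map_div₀, div_eq_neg_div_iff_of_endsIn (Iso.endsIn ⟨σ, rfl⟩ hg) (Iso.endsIn ⟨σ, rfl⟩ hh)
      hg hh (disjoint_Vars_permAct σ d) d] at heq
    exact heq.imp (⟨σ, ·.1⟩) (⟨σ, ·.2⟩)
  · rintro (hiso | hiso)
    · obtain ⟨ρ, hρg, hρh⟩ := Iso.exists_perm_of_disjoint hg.isAE hh.isAE d
        (by rwa [Vars_neg]) hiso (.refl h)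
      exact ⟨ρ, by rw [map_div₀, hρg, hρh, neg_div]⟩
    · obtain ⟨ρ, hρg, hρh⟩ := Iso.exists_perm_of_disjoint hg.isAE hh.isAE d
        (by rwa [Vars_neg]) (.refl g) hiso
      exact ⟨ρ, by rw [map_div₀, hρg, hρh, div_neg]⟩

lemma firstType_div_iff (hg : EndsIn g {Op.div}ᶜ) (hh : EndsIn h {Op.div}ᶜ)
    (d : Disjoint (Vars g) (Vars h)) : FirstType (g / h) ↔ FirstType g ∧ FirstType h := by
  simp only [FirstType, isAE_neg_div_iff hg hh d, hg.isAE, hh.isAE, hg.isAE.div hh.isAE d,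
    true_and, not_or]

lemma thirdType_div_iff (hg : EndsIn g {Op.div}ᶜ) (hh : EndsIn h {Op.div}ᶜ)
    (d : Disjoint (Vars g) (Vars h)) : ThirdType (g / h) ↔ ThirdType g ∨ ThirdType h := by
  have hgneg : Iso g (-g) → IsAE (-g) := fun hiso => hiso.isAE hg.isAE
  have hhneg : Iso h (-h) → IsAE (-h) := fun hiso => hiso.isAE hh.isAE
  simp only [ThirdType, isAE_neg_div_iff hg hh d, iso_neg_div_iff hg hh d, hg.isAE, hh.isAE,
    hg.isAE.div hh.isAE d, true_and]
  tauto

lemma secondType_div_iff (hg : EndsIn g {Op.div}ᶜ) (hh : EndsIn h {Op.div}ᶜ)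
    (d : Disjoint (Vars g) (Vars h)) : SecondType (g / h) ↔
      SecondType g ∧ (FirstType h ∨ SecondType h) ∨ FirstType g ∧ SecondType h := by
  have hgneg : Iso g (-g) → IsAE (-g) := fun hiso => hiso.isAE hg.isAE
  have hhneg : Iso h (-h) → IsAE (-h) := fun hiso => hiso.isAE hh.isAE
  simp only [SecondType, FirstType, isAE_neg_div_iff hg hh d, iso_neg_div_iff hg hh d, hg.isAE,
    hh.isAE, hg.isAE.div hh.isAE d, true_and]
  tauto

end QuotientTypes

section Finiteness

lemma finite_setOf_isAE_Vars_subset {S : Set ℕ} (hS : S.Finite) :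
    {f : K | IsAE f ∧ Vars f ⊆ S}.Finite := by
  induction hcard : S.ncard using Nat.strong_induction_on generalizing S with
  | _ n ih =>
  let A : Set K := ⋃ i ∈ S, {f | IsAE f ∧ Vars f ⊆ S \ {i}}
  have hA : A.Finite := hS.biUnion fun i hi =>
    ih _ (hcard ▸ Set.ncard_sdiff_singleton_lt_of_mem hi hS) hS.sdiff rfl
  have hmem {g h : K} (hg : IsAE g) (hh : IsAE h) (d : Disjoint (Vars g) (Vars h))
      (hgS : Vars g ⊆ S) (hhS : Vars h ⊆ S) : g ∈ A := by
    obtain ⟨i, hi⟩ := hh.Vars_nonempty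
    exact Set.mem_biUnion (hhS hi)
      ⟨hg, Set.subset_sdiff_singleton hgS (Set.disjoint_right.1 d hi)⟩
  have huniv : (Set.univ : Set Op).Finite :=
    (Set.toFinite {Op.add, Op.sub, Op.mul, Op.div}).subset fun o _ => by cases o <;> simp
  refine ((hS.image Xv).union
    (huniv.biUnion fun o _ => hA.image2 (applyOp o) hA)).subset ?_
  rintro f ⟨hf, hfS⟩
  rcases hf.exists_applyOp with ⟨i, rfl⟩ | ⟨o, g, h, hg, hh, d, hVars, rfl⟩
  · exact .inl ⟨i, hfS (by simp [Vars_Xv]), rfl⟩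
  · rw [hVars, Set.union_subset_iff] at hfS
    exact .inr (Set.mem_biUnion (Set.mem_univ o) ⟨g, hmem hg hh d hfS.1 hfS.2, h,
      hmem hh hg d.symm hfS.2 hfS.1, rfl⟩)

lemma varsUpTo_eq_Icc (n : ℕ) : varsUpTo n = Set.Icc 1 n := rfl

lemma varsUpTo_finite (n : ℕ) : (varsUpTo n).Finite := Set.finite_Icc 1 n

lemma ncard_varsUpTo (n : ℕ) : (varsUpTo n).ncard = n := by
  rw [varsUpTo_eq_Icc, ← Finset.coe_Icc, Set.ncard_coe_finset, Nat.card_Icc, Nat.add_sub_cancel]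

lemma AEn_finite (n : ℕ) : (AEn n).Finite :=
  (finite_setOf_isAE_Vars_subset (varsUpTo_finite n)).subset fun _ hf => ⟨hf.1, hf.2.subset⟩

lemma classes_finite {S : Set K} {n : ℕ} (hS : S ⊆ AEn n) : (classes S).Finite :=
  ((AEn_finite n).subset hS).image _

lemma countClasses_union {S T : Set K} {n : ℕ} (hS : S ⊆ AEn n) (hT : T ⊆ AEn n)
    (hST : ∀ f ∈ S, ∀ g ∈ T, ¬ Iso f g) :
    countClasses (S ∪ T) = countClasses S + countClasses T := by
  rw [countClasses, classes, Set.image_union]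
  refine Set.ncard_union_eq (Set.disjoint_left.2 ?_) (classes_finite hS) (classes_finite hT)
  rintro _ ⟨f, hf, rfl⟩ ⟨g, hg, heq⟩
  exact hST f hf g hg (classOf_eq_classOf_iff.1 heq.symm)

end Finiteness

section CountingQuotients

lemma exists_iso_Vars_eq {f : K} (hf : IsAE f) {S : Set ℕ} (hS : S.Finite)
    (hcard : (Vars f).ncard = S.ncard) : ∃ g, Iso f g ∧ Vars g = S := by
  obtain ⟨φ, hφ⟩ := hf.Vars_finite.exists_bijOn_of_encard_eq (t := S) <| by
    rw [← hf.Vars_finite.cast_ncard_eq, ← hS.cast_ncard_eq, hcard]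
  obtain ⟨ρ, hρ⟩ := exists_perm_eqOn hf.Vars_finite hφ.injOn
  exact ⟨permAct ρ f, ⟨ρ, rfl⟩, by rw [Vars_permAct, hρ.image_eq, hφ.image_eq]⟩

lemma ncard_image_eq_ncard_image {α β γ : Type*} {φ : α → β} {ψ : α → γ} {S : Set α}
    (h : ∀ a ∈ S, ∀ b ∈ S, φ a = φ b ↔ ψ a = ψ b) : (φ '' S).ncard = (ψ '' S).ncard := by
  choose r hrS hr using fun x : φ '' S => x.2
  refine Set.ncard_congr (fun x hx => ψ (r ⟨x, hx⟩)) (fun x hx => ⟨_, hrS _, rfl⟩) ?_ ?_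
  · intro x y hx hy hxy
    rwa [← h _ (hrS _) _ (hrS _), hr, hr] at hxy
  · rintro _ ⟨a, ha, rfl⟩
    exact ⟨φ a, ⟨a, ha, rfl⟩, (h _ (hrS _) _ ha).1 (hr ⟨φ a, _⟩)⟩

/-- A set of expressions closed under isomorphism. -/
def IsoClosed (U : Set K) : Prop := ∀ ⦃f g⦄, Iso f g → f ∈ U → g ∈ U

lemma IsoClosed.union {U V : Set K} (hU : IsoClosed U) (hV : IsoClosed V) : IsoClosed (U ∪ V) :=
  fun _ _ hfg => .imp (hU hfg) (hV hfg)

variable {U V U' V' : Set K} {n : ℕ}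

lemma classes_inter_AEn (hU : IsoClosed U) (hAE : ∀ f ∈ U, IsAE f) (n : ℕ) :
    classes (U ∩ AEn n) = classOf '' {f ∈ U | (Vars f).ncard = n} := by
  ext c
  constructor
  · rintro ⟨f, ⟨hf, -, hVars⟩, rfl⟩
    exact ⟨f, ⟨hf, by rw [hVars, ncard_varsUpTo]⟩, rfl⟩
  · rintro ⟨f, ⟨hf, hcard⟩, rfl⟩
    obtain ⟨g, hfg, hVars⟩ := exists_iso_Vars_eq (hAE f hf) (varsUpTo_finite n)
      (by rw [hcard, ncard_varsUpTo])
    exact ⟨g, ⟨hU hfg hf, hfg.isAE (hAE f hf), hVars⟩, classOf_eq_classOf_iff.2 hfg.symm⟩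

/-- Pairs from `U × V` whose variable sets partition `{1, …, n}`. -/
def splitPairs (U V : Set K) (n : ℕ) : Set (K × K) :=
  {p | p.1 ∈ U ∧ p.2 ∈ V ∧ Disjoint (Vars p.1) (Vars p.2) ∧ Vars p.1 ∪ Vars p.2 = varsUpTo n}

/-- The quotients in `x₁, …, xₙ` with numerator in `U` and denominator in `V`. -/
def quotients (U V : Set K) (n : ℕ) : Set K := (fun p => p.1 / p.2) '' splitPairs U V n

lemma ncard_Vars_add_eq_of_mem_splitPairs {p : K × K} (hp : p ∈ splitPairs U V n)
    (h₁ : IsAE p.1) (h₂ : IsAE p.2) : (Vars p.1).ncard + (Vars p.2).ncard = n := by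
  rw [← h₁.ncard_Vars_union h₂ hp.2.2.1, hp.2.2.2, ncard_varsUpTo]

lemma image_classOf_splitPairs (hU : IsoClosed U) (hUAE : ∀ f ∈ U, IsAE f) (hV : IsoClosed V)
    (hVAE : ∀ f ∈ V, IsAE f) (n : ℕ) :
    Prod.map classOf classOf '' splitPairs U V n = ⋃ k ∈ (Finset.Icc 1 (n - 1) : Set ℕ),
      classes (U ∩ AEn k) ×ˢ classes (V ∩ AEn (n - k)) := by
  simp only [classes_inter_AEn hU hUAE, classes_inter_AEn hV hVAE, Finset.coe_Icc]
  refine Set.Subset.antisymm ?_ (Set.iUnion₂_subset fun k hk => ?_)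
  · rintro _ ⟨⟨g, h⟩, hp, rfl⟩
    have hg := hUAE g hp.1
    have hh := hVAE h hp.2.1
    have hcard : (Vars g).ncard + (Vars h).ncard = n :=
      ncard_Vars_add_eq_of_mem_splitPairs hp hg hh
    have hgpos := hg.ncard_Vars_pos
    have hhpos := hh.ncard_Vars_pos
    exact Set.mem_biUnion (x := (Vars g).ncard) (Set.mem_Icc.2 (by lia))
      ⟨⟨g, ⟨hp.1, rfl⟩, rfl⟩, h, ⟨hp.2.1, by lia⟩, rfl⟩
  · rintro ⟨_, _⟩ ⟨⟨g, ⟨hg, hgk⟩, rfl⟩, h, ⟨hh, hhk⟩, rfl⟩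
    have hsub : varsUpTo k ⊆ varsUpTo n := Set.Icc_subset_Icc_right (by have := hk.2; lia)
    obtain ⟨g', hgg', hg'⟩ := exists_iso_Vars_eq (hUAE g hg) (varsUpTo_finite k)
      (by rw [hgk, ncard_varsUpTo])
    obtain ⟨h', hhh', hh'⟩ := exists_iso_Vars_eq (hVAE h hh) (varsUpTo_finite n).sdiff
      (S := varsUpTo n \ varsUpTo k)
      (by rw [hhk, Set.ncard_sdiff hsub (varsUpTo_finite k), ncard_varsUpTo, ncard_varsUpTo])
    refine ⟨(g', h'), ⟨hU hgg' hg, hV hhh' hh, ?_, ?_⟩, Prod.ext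
      (classOf_eq_classOf_iff.2 hgg'.symm) (classOf_eq_classOf_iff.2 hhh'.symm)⟩
    · simpa only [hg', hh'] using Set.disjoint_sdiff_right
    · simpa only [hg', hh'] using Set.union_sdiff_cancel hsub

lemma ncard_biUnion_classes_prod (U V : Set K) (n : ℕ) (s : Finset ℕ) :
    (⋃ k ∈ (s : Set ℕ), classes (U ∩ AEn k) ×ˢ classes (V ∩ AEn (n - k))).ncard =
      ∑ k ∈ s, countClasses (U ∩ AEn k) * countClasses (V ∩ AEn (n - k)) := by
  rw [s.finite_toSet.ncard_biUnion, finsum_mem_coe_finset]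
  · exact Finset.sum_congr rfl fun k _ => Set.ncard_prod
  · exact fun k _ => (classes_finite Set.inter_subset_right).prod
      (classes_finite Set.inter_subset_right)
  · refine fun k _ l _ hkl => Set.disjoint_left.2 ?_
    rintro _ ⟨⟨f, hf, hfc⟩, -⟩ ⟨⟨g, hg, hgc⟩, -⟩
    have hcard := (classOf_eq_classOf_iff.1 (hfc.trans hgc.symm)).ncard_Vars_eq
    rw [hf.2.2, hg.2.2, ncard_varsUpTo, ncard_varsUpTo] at hcard
    exact hkl hcard

lemma quotients_subset_AEn (hU : U ⊆ Aset {Op.div}ᶜ) (hV : V ⊆ Aset {Op.div}ᶜ) :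
    quotients U V n ⊆ AEn n := by
  rintro _ ⟨p, ⟨hg, hh, d, hVars⟩, rfl⟩
  exact ⟨.div (hU hg).1 (hV hh).1 d, by
    rw [Vars_div d (hU hg).1.ne_zero (hV hh).1.ne_zero, hVars]⟩

/-- A quotient determines the classes of its numerator and denominator up to a common sign, so
the classes of quotients correspond to pairs of classes if the sign change acts trivially. -/
lemma countClasses_quotients (hU : U ⊆ Aset {Op.div}ᶜ) (hV : V ⊆ Aset {Op.div}ᶜ)
    (hUiso : IsoClosed U) (hViso : IsoClosed V)
    (hsign : ∀ g ∈ U, ∀ g' ∈ U, ∀ h ∈ V, ∀ h' ∈ V, Iso g (-g') → Iso h (-h') →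
      Iso g g' ∧ Iso h h') (n : ℕ) :
    countClasses (quotients U V n) = ∑ k ∈ Finset.Icc 1 (n - 1),
      countClasses (U ∩ AEn k) * countClasses (V ∩ AEn (n - k)) := by
  rw [← ncard_biUnion_classes_prod, ← image_classOf_splitPairs hUiso (fun f hf => (hU hf).1)
    hViso (fun f hf => (hV hf).1), countClasses, classes, quotients, Set.image_image]
  refine ncard_image_eq_ncard_image fun p ⟨hg, hh, d, _⟩ q ⟨hg', hh', d', _⟩ => ?_
  rw [Prod.ext_iff, Prod.map_fst, Prod.map_fst, Prod.map_snd, Prod.map_snd,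
    classOf_eq_classOf_iff, classOf_eq_classOf_iff, classOf_eq_classOf_iff,
    iso_div_iff (hU hg).2 (hV hh).2 (hU hg').2 (hV hh').2 d d', or_iff_left_iff_imp]
  exact fun hneg => hsign _ hg _ hg' _ hh _ hh' hneg.1 hneg.2

/-- No element of `U` is isomorphic, up to sign, to an element of `V`. -/
def SeparatedUpToSign (U V : Set K) : Prop := ∀ g ∈ U, ∀ h ∈ V, ¬ Iso g h ∧ ¬ Iso g (-h)

lemma countClasses_quotients_union (hU : U ⊆ Aset {Op.div}ᶜ) (hV : V ⊆ Aset {Op.div}ᶜ)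
    (hU' : U' ⊆ Aset {Op.div}ᶜ) (hV' : V' ⊆ Aset {Op.div}ᶜ) (hsep : SeparatedUpToSign U U')
    (n : ℕ) : countClasses (quotients U V n ∪ quotients U' V' n) =
      countClasses (quotients U V n) + countClasses (quotients U' V' n) := by
  refine countClasses_union (quotients_subset_AEn hU hV) (quotients_subset_AEn hU' hV') ?_
  rintro _ ⟨p, ⟨hg, hh, d, -⟩, rfl⟩ _ ⟨q, ⟨hg', hh', d', -⟩, rfl⟩ hiso
  rw [iso_div_iff (hU hg).2 (hV hh).2 (hU' hg').2 (hV' hh').2 d d'] at hiso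
  exact hiso.elim (fun h => (hsep _ hg _ hg').1 h.1) fun h => (hsep _ hg _ hg').2 h.1

lemma div_mem_quotients {g h : K} (hg : g ∈ U) (hh : h ∈ V) (d : Disjoint (Vars g) (Vars h))
    (hVars : Vars g ∪ Vars h = varsUpTo n) : g / h ∈ quotients U V n :=
  ⟨(g, h), ⟨hg, hh, d, hVars⟩, rfl⟩

lemma div_mem_quotients_of_neg {g h : K} (hg : -g ∈ U) (hh : -h ∈ V)
    (d : Disjoint (Vars g) (Vars h)) (hVars : Vars g ∪ Vars h = varsUpTo n) :
    g / h ∈ quotients U V n := by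
  rw [← neg_div_neg_eq]
  rw [← Vars_neg g, ← Vars_neg h] at d hVars
  exact div_mem_quotients hg hh d hVars

lemma setOf_endsIn_div_inter_AEn (T : K → Prop) (n : ℕ) :
    {f | T f ∧ EndsIn f {Op.div}} ∩ AEn n =
      {f ∈ quotients (Aset {Op.div}ᶜ) (Aset {Op.div}ᶜ) n | T f} := by
  ext f
  constructor
  · rintro ⟨⟨hT, o, rfl, ho⟩, -, hVars⟩
    obtain ⟨g, h, hg, hh, d, rfl⟩ := ho.exists_eq_div
    rw [Vars_div d hg.isAE.ne_zero hh.isAE.ne_zero] at hVars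
    exact ⟨div_mem_quotients ⟨hg.isAE, hg⟩ ⟨hh.isAE, hh⟩ d hVars, hT⟩
  · rintro ⟨hf, hT⟩
    refine ⟨⟨hT, ?_⟩, quotients_subset_AEn subset_rfl subset_rfl hf⟩
    obtain ⟨p, ⟨hg, hh, d, -⟩, rfl⟩ := hf
    exact ⟨_, rfl, .div_of_endsIn hg.2 hh.2 d⟩

end CountingQuotients

section SignRepresentatives

variable {f g h : K} {s : Set Op} {U V : Set K} {n : ℕ}

lemma Fset_subset_Aset : Fset s ⊆ Aset s := fun _ hf => ⟨hf.1.1, hf.2⟩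

lemma Bset_subset_Aset : Bset s ⊆ Aset s := fun _ hf => ⟨hf.1.1, hf.2⟩

lemma Cset_subset_Aset : Cset s ⊆ Aset s := fun _ hf => ⟨hf.1.1, hf.2⟩

lemma isoClosed_Fset (s : Set Op) : IsoClosed (Fset s) :=
  fun _ _ hfg hf => ⟨hfg.firstType hf.1, hfg.endsIn hf.2⟩

lemma isoClosed_Bset (s : Set Op) : IsoClosed (Bset s) :=
  fun _ _ hfg hf => ⟨hfg.secondType hf.1, hfg.endsIn hf.2⟩

lemma isoClosed_Cset (s : Set Op) : IsoClosed (Cset s) :=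
  fun _ _ hfg hf => ⟨hfg.thirdType hf.1, hfg.endsIn hf.2⟩

lemma neg_mem_Bset (hf : f ∈ Bset {Op.div}ᶜ) : -f ∈ Bset {Op.div}ᶜ := by
  obtain ⟨⟨hf, hneg, hiso⟩, hends⟩ := hf
  refine ⟨⟨hneg, ?_, ?_⟩, hends.neg hneg⟩
  · rwa [neg_neg]
  · rw [neg_neg]
    exact fun h => hiso h.symm

lemma neg_mem_Cset (hf : f ∈ Cset {Op.div}ᶜ) : -f ∈ Cset {Op.div}ᶜ := by
  obtain ⟨⟨hf, hneg, hiso⟩, hends⟩ := hf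
  refine ⟨⟨hneg, ?_, ?_⟩, hends.neg hneg⟩
  · rwa [neg_neg]
  · rw [neg_neg]
    exact hiso.symm

lemma classOf_neg (f : K) : classOf (-f) = Neg.neg '' classOf f := by
  ext g
  rw [Set.image_neg_eq_neg, Set.mem_neg]
  exact ⟨fun h => neg_neg f ▸ h.neg, fun h => neg_neg g ▸ h.neg⟩

/-- One of the two classes `[f]`, `[-f]` for each second-type `f`, chosen by an arbitrary
well-ordering of the classes; it plays the role of the monic elements `ℳℬ(s)`. -/
def halfBset (s : Set Op) : Set K := {f ∈ Bset s | WellOrderingRel (classOf f) (classOf (-f))}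

lemma isoClosed_halfBset (s : Set Op) : IsoClosed (halfBset s) := by
  refine fun f g hfg hf => ⟨isoClosed_Bset s hfg hf.1, ?_⟩
  rw [← classOf_eq_classOf_iff.2 hfg, ← classOf_eq_classOf_iff.2 hfg.neg]
  exact hf.2

lemma neg_notMem_halfBset (hf : f ∈ halfBset s) : -f ∉ halfBset s := fun hneg => by
  have hrel := hneg.2
  rw [neg_neg] at hrel
  exact asymm hf.2 hrel

lemma mem_halfBset_or_neg_mem (hf : f ∈ Bset {Op.div}ᶜ) :
    f ∈ halfBset {Op.div}ᶜ ∨ -f ∈ halfBset {Op.div}ᶜ := by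
  rcases trichotomous_of WellOrderingRel (classOf f) (classOf (-f)) with hlt | heq | hgt
  · exact .inl ⟨hf, hlt⟩
  · exact absurd (classOf_eq_classOf_iff.1 heq) hf.1.2.2
  · exact .inr ⟨neg_mem_Bset hf, by rwa [neg_neg]⟩

lemma neg_mem_AEn (hf : f ∈ AEn n) (hneg : IsAE (-f)) : -f ∈ AEn n :=
  ⟨hneg, (Vars_neg f).trans hf.2⟩

lemma Bset_inter_AEn (n : ℕ) : Bset {Op.div}ᶜ ∩ AEn n =
    halfBset {Op.div}ᶜ ∩ AEn n ∪ Neg.neg '' (halfBset {Op.div}ᶜ ∩ AEn n) := by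
  ext f
  constructor
  · rintro ⟨hf, hfn⟩
    rcases mem_halfBset_or_neg_mem hf with h | h
    · exact .inl ⟨h, hfn⟩
    · exact .inr ⟨-f, ⟨h, neg_mem_AEn hfn hf.1.2.1⟩, neg_neg f⟩
  · rintro (⟨hf, hfn⟩ | ⟨g, ⟨hg, hgn⟩, rfl⟩)
    · exact ⟨hf.1, hfn⟩
    · exact ⟨neg_mem_Bset hg.1, neg_mem_AEn hgn hg.1.1.2.1⟩

lemma countClasses_image_neg (S : Set K) : countClasses (Neg.neg '' S) = countClasses S := by
  have hclasses : classes (Neg.neg '' S) = (Neg.neg '' ·) '' classes S := by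
    simp only [classes, Set.image_image, classOf_neg]
  rw [countClasses, hclasses]
  exact Set.ncard_image_of_injective _ neg_injective.image_injective

lemma countClasses_Bset_inter_AEn (n : ℕ) : countClasses (Bset {Op.div}ᶜ ∩ AEn n) =
    2 * countClasses (halfBset {Op.div}ᶜ ∩ AEn n) := by
  rw [Bset_inter_AEn, countClasses_union (n := n) Set.inter_subset_right,
    countClasses_image_neg, two_mul]
  · rintro _ ⟨f, ⟨hf, hfn⟩, rfl⟩
    exact neg_mem_AEn hfn hf.1.1.2.1
  · rintro f ⟨hf, -⟩ _ ⟨g, ⟨hg, -⟩, rfl⟩ hiso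
    exact neg_notMem_halfBset hg (isoClosed_halfBset _ hiso hf)

/-- Representatives, up to isomorphism and sign, of the expressions of first and second type that
do not end with `÷`. -/
def signReps : Set K := Fset {Op.div}ᶜ ∪ halfBset {Op.div}ᶜ

lemma isoClosed_signReps : IsoClosed signReps := (isoClosed_Fset _).union (isoClosed_halfBset _)

lemma signReps_subset_Aset : signReps ⊆ Aset {Op.div}ᶜ :=
  Set.union_subset Fset_subset_Aset fun _ hf => Bset_subset_Aset hf.1

lemma firstType_or_secondType_of_mem_signReps (hf : f ∈ signReps) :
    FirstType f ∨ SecondType f :=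
  hf.imp And.left fun hf => hf.1.1

lemma mem_signReps_or_neg_mem (hf : EndsIn f {Op.div}ᶜ) (htype : FirstType f ∨ SecondType f) :
    f ∈ signReps ∨ -f ∈ signReps := by
  rcases htype with hfirst | hsecond
  · exact .inl (.inl ⟨hfirst, hf⟩)
  · exact (mem_halfBset_or_neg_mem ⟨hsecond, hf⟩).imp .inr .inr

lemma not_iso_neg_of_mem_signReps (hf : f ∈ signReps) (hg : g ∈ signReps) : ¬ Iso f (-g) := by
  intro hiso
  have hAE : IsAE (-g) := hiso.isAE (signReps_subset_Aset hf).1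
  rcases isoClosed_signReps hiso hf with hfirst | hhalf
  · exact hfirst.1.2 (by simpa only [neg_neg] using (signReps_subset_Aset hg).1)
  · rcases hg with hg | hg
    · exact hg.1.2 hAE
    · exact neg_notMem_halfBset hg hhalf

lemma disjoint_Bset_Fset (s : Set Op) : Disjoint (Bset s) (Fset s) :=
  Set.disjoint_left.2 fun _ hB hF => hF.1.2 hB.1.2.1

lemma disjoint_Cset_signReps (s : Set Op) : Disjoint (Cset s) signReps :=
  Set.disjoint_left.2 fun _ hC hf => (firstType_or_secondType_of_mem_signReps hf).elim
    (fun hF => hF.2 hC.1.2.1) fun hB => hB.2.2 hC.1.2.2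

lemma countClasses_signReps_inter_AEn (n : ℕ) : countClasses (signReps ∩ AEn n) =
    countClasses (Fset {Op.div}ᶜ ∩ AEn n) + countClasses (halfBset {Op.div}ᶜ ∩ AEn n) := by
  rw [signReps, Set.union_inter_distrib_right]
  refine countClasses_union Set.inter_subset_right Set.inter_subset_right ?_
  exact fun f hf g hg hfg => Set.disjoint_left.1 (disjoint_Bset_Fset _) hg.1.1
    (isoClosed_Fset _ hfg hf.1)

lemma countClasses_signReps_union_Cset_inter_AEn (n : ℕ) :
    countClasses ((signReps ∪ Cset {Op.div}ᶜ) ∩ AEn n) =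
      countClasses (signReps ∩ AEn n) + countClasses (Cset {Op.div}ᶜ ∩ AEn n) := by
  rw [Set.union_inter_distrib_right]
  refine countClasses_union Set.inter_subset_right Set.inter_subset_right ?_
  exact fun f hf g hg hfg => Set.disjoint_left.1 (disjoint_Cset_signReps _) hg.1
    (isoClosed_signReps hfg hf.1)

lemma iso_of_iso_neg (hf : f ∈ signReps ∪ Cset {Op.div}ᶜ) (hg : g ∈ signReps ∪ Cset {Op.div}ᶜ)
    (hiso : Iso f (-g)) : Iso f g := by
  rcases hg with hg | hg
  · rcases hf with hf | hf
    · exact absurd hiso (not_iso_neg_of_mem_signReps hf hg)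
    · have hC : g ∈ Cset {Op.div}ᶜ := neg_neg g ▸ neg_mem_Cset (isoClosed_Cset _ hiso hf)
      exact hiso.trans hC.1.2.2.symm
  · exact hiso.trans hg.1.2.2.symm

lemma separatedUpToSign_of_disjoint (hU : IsoClosed U) (hneg : ∀ f ∈ U, -f ∈ U)
    (hUV : Disjoint U V) : SeparatedUpToSign U V := by
  refine fun f hf g hg => ⟨fun hiso => ?_, fun hiso => ?_⟩
  · exact Set.disjoint_left.1 hUV (hU hiso hf) hg
  · exact Set.disjoint_left.1 hUV (neg_neg g ▸ hneg _ (hU hiso hf)) hg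

end SignRepresentatives

section QuotientCounts

lemma Fset_div_inter_AEn (n : ℕ) :
    Fset {Op.div} ∩ AEn n = quotients (Fset {Op.div}ᶜ) (Fset {Op.div}ᶜ) n := by
  refine (setOf_endsIn_div_inter_AEn FirstType n).trans (Set.ext fun f => ⟨?_, ?_⟩)
  · rintro ⟨⟨p, ⟨hg, hh, d, hVars⟩, rfl⟩, htype⟩
    rw [firstType_div_iff hg.2 hh.2 d] at htype
    exact div_mem_quotients ⟨htype.1, hg.2⟩ ⟨htype.2, hh.2⟩ d hVars
  · rintro ⟨p, ⟨hg, hh, d, hVars⟩, rfl⟩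
    exact ⟨div_mem_quotients (Fset_subset_Aset hg) (Fset_subset_Aset hh) d hVars,
      (firstType_div_iff hg.2 hh.2 d).2 ⟨hg.1, hh.1⟩⟩

lemma Bset_div_inter_AEn (n : ℕ) : Bset {Op.div} ∩ AEn n =
    quotients (Bset {Op.div}ᶜ) signReps n ∪ quotients (Fset {Op.div}ᶜ) (Bset {Op.div}ᶜ) n := by
  refine (setOf_endsIn_div_inter_AEn SecondType n).trans (Set.ext fun f => ⟨?_, ?_⟩)
  · rintro ⟨⟨p, ⟨hg, hh, d, hVars⟩, rfl⟩, htype⟩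
    rcases (secondType_div_iff hg.2 hh.2 d).1 htype with ⟨hgB, hhtype⟩ | ⟨hgF, hhB⟩
    · rcases mem_signReps_or_neg_mem hh.2 hhtype with hhrep | hhrep
      · exact .inl (div_mem_quotients ⟨hgB, hg.2⟩ hhrep d hVars)
      · exact .inl (div_mem_quotients_of_neg (neg_mem_Bset ⟨hgB, hg.2⟩) hhrep d hVars)
    · exact .inr (div_mem_quotients ⟨hgF, hg.2⟩ ⟨hhB, hh.2⟩ d hVars)
  · rintro (⟨p, ⟨hg, hh, d, hVars⟩, rfl⟩ | ⟨p, ⟨hg, hh, d, hVars⟩, rfl⟩)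
    · have hhA := signReps_subset_Aset hh
      exact ⟨div_mem_quotients (Bset_subset_Aset hg) hhA d hVars,
        (secondType_div_iff hg.2 hhA.2 d).2
          (.inl ⟨hg.1, firstType_or_secondType_of_mem_signReps hh⟩)⟩
    · exact ⟨div_mem_quotients (Fset_subset_Aset hg) (Bset_subset_Aset hh) d hVars,
        (secondType_div_iff hg.2 hh.2 d).2 (.inr ⟨hg.1, hh.1⟩)⟩

lemma IsAE.firstType_or_secondType {f : K} (hf : IsAE f) (hthird : ¬ ThirdType f) :
    FirstType f ∨ SecondType f := by
  by_cases hneg : IsAE (-f)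
  · exact .inr ⟨hf, hneg, fun hiso => hthird ⟨hf, hneg, hiso⟩⟩
  · exact .inl ⟨hf, hneg⟩

lemma div_mem_quotients_of_thirdType {g h : K} {n : ℕ} (hg : EndsIn g {Op.div}ᶜ)
    (hh : EndsIn h {Op.div}ᶜ) (d : Disjoint (Vars g) (Vars h))
    (hVars : Vars g ∪ Vars h = varsUpTo n) (htype : ThirdType g ∨ ThirdType h) :
    g / h ∈ quotients (Cset {Op.div}ᶜ) (signReps ∪ Cset {Op.div}ᶜ) n ∪
      quotients signReps (Cset {Op.div}ᶜ) n := by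
  by_cases hgC : ThirdType g
  · have hgC : g ∈ Cset {Op.div}ᶜ := ⟨hgC, hg⟩
    by_cases hhC : ThirdType h
    · exact .inl (div_mem_quotients hgC (.inr ⟨hhC, hh⟩) d hVars)
    · rcases mem_signReps_or_neg_mem hh (hh.isAE.firstType_or_secondType hhC) with hhrep | hhrep
      · exact .inl (div_mem_quotients hgC (.inl hhrep) d hVars)
      · exact .inl (div_mem_quotients_of_neg (neg_mem_Cset hgC) (.inl hhrep) d hVars)
  · have hhC : h ∈ Cset {Op.div}ᶜ := ⟨htype.resolve_left hgC, hh⟩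
    rcases mem_signReps_or_neg_mem hg (hg.isAE.firstType_or_secondType hgC) with hgrep | hgrep
    · exact .inr (div_mem_quotients hgrep hhC d hVars)
    · exact .inr (div_mem_quotients_of_neg hgrep (neg_mem_Cset hhC) d hVars)

lemma signReps_union_Cset_subset_Aset : signReps ∪ Cset {Op.div}ᶜ ⊆ Aset {Op.div}ᶜ :=
  Set.union_subset signReps_subset_Aset Cset_subset_Aset

lemma Cset_div_inter_AEn (n : ℕ) : Cset {Op.div} ∩ AEn n =
    quotients (Cset {Op.div}ᶜ) (signReps ∪ Cset {Op.div}ᶜ) n ∪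
      quotients signReps (Cset {Op.div}ᶜ) n := by
  refine (setOf_endsIn_div_inter_AEn ThirdType n).trans (Set.ext fun f => ⟨?_, ?_⟩)
  · rintro ⟨⟨p, ⟨hg, hh, d, hVars⟩, rfl⟩, htype⟩
    rw [thirdType_div_iff hg.2 hh.2 d] at htype
    exact div_mem_quotients_of_thirdType hg.2 hh.2 d hVars htype
  · rintro (⟨p, ⟨hg, hh, d, hVars⟩, rfl⟩ | ⟨p, ⟨hg, hh, d, hVars⟩, rfl⟩)
    · have hhA := signReps_union_Cset_subset_Aset hh
      exact ⟨div_mem_quotients (Cset_subset_Aset hg) hhA d hVars,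
        (thirdType_div_iff hg.2 hhA.2 d).2 (.inl hg.1)⟩
    · have hgA := signReps_subset_Aset hg
      exact ⟨div_mem_quotients hgA (Cset_subset_Aset hh) d hVars,
        (thirdType_div_iff hgA.2 hh.2 d).2 (.inr hh.1)⟩

lemma sum_Icc_reflect {M : Type*} [AddCommMonoid M] (F : ℕ → ℕ → M) (n : ℕ) :
    ∑ k ∈ Finset.Icc 1 (n - 1), F k (n - k) = ∑ k ∈ Finset.Icc 1 (n - 1), F (n - k) k := by
  refine Finset.sum_nbij' (n - ·) (n - ·) ?_ ?_ ?_ ?_ ?_ <;> intro k hk <;>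
    rw [Finset.mem_Icc] at hk
  · exact Finset.mem_Icc.2 (by lia)
  · exact Finset.mem_Icc.2 (by lia)
  · lia
  · lia
  · rw [Nat.sub_sub_self (by lia)]

lemma countClasses_Fset_div (n : ℕ) : countClasses (Fset {Op.div} ∩ AEn n) =
    ∑ k ∈ Finset.Icc 1 (n - 1),
      countClasses (Fset {Op.div}ᶜ ∩ AEn k) * countClasses (Fset {Op.div}ᶜ ∩ AEn (n - k)) := by
  rw [Fset_div_inter_AEn, countClasses_quotients Fset_subset_Aset Fset_subset_Aset
    (isoClosed_Fset _) (isoClosed_Fset _)]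
  exact fun g hg g' hg' _ _ _ _ hiso _ =>
    absurd hiso (not_iso_neg_of_mem_signReps (.inl hg) (.inl hg'))

lemma countClasses_Bset_div (n : ℕ) : countClasses (Bset {Op.div} ∩ AEn n) =
    ∑ k ∈ Finset.Icc 1 (n - 1), countClasses (Bset {Op.div}ᶜ ∩ AEn (n - k)) *
      (2 * countClasses (Fset {Op.div}ᶜ ∩ AEn k) + countClasses (halfBset {Op.div}ᶜ ∩ AEn k)) := by
  have hsep : SeparatedUpToSign (Bset {Op.div}ᶜ) (Fset {Op.div}ᶜ) :=
    separatedUpToSign_of_disjoint (isoClosed_Bset _) (fun _ => neg_mem_Bset) (disjoint_Bset_Fset _)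
  rw [Bset_div_inter_AEn, countClasses_quotients_union Bset_subset_Aset signReps_subset_Aset
      Fset_subset_Aset Bset_subset_Aset hsep,
    countClasses_quotients Bset_subset_Aset signReps_subset_Aset (isoClosed_Bset _)
      isoClosed_signReps fun _ _ _ _ _ hh _ hh' _ hiso =>
        absurd hiso (not_iso_neg_of_mem_signReps hh hh'),
    countClasses_quotients Fset_subset_Aset Bset_subset_Aset (isoClosed_Fset _)
      (isoClosed_Bset _) fun _ hg _ hg' _ _ _ _ hiso _ =>
        absurd hiso (not_iso_neg_of_mem_signReps (.inl hg) (.inl hg')),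
    sum_Icc_reflect fun i j =>
      countClasses (Bset {Op.div}ᶜ ∩ AEn i) * countClasses (signReps ∩ AEn j),
    ← Finset.sum_add_distrib]
  refine Finset.sum_congr rfl fun k _ => ?_
  rw [countClasses_signReps_inter_AEn]
  ring

lemma countClasses_Cset_div (n : ℕ) : countClasses (Cset {Op.div} ∩ AEn n) =
    ∑ k ∈ Finset.Icc 1 (n - 1), countClasses (Cset {Op.div}ᶜ ∩ AEn (n - k)) *
      (2 * countClasses (Fset {Op.div}ᶜ ∩ AEn k) + countClasses (Bset {Op.div}ᶜ ∩ AEn k) +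
        countClasses (Cset {Op.div}ᶜ ∩ AEn k)) := by
  have hsep : SeparatedUpToSign (Cset {Op.div}ᶜ) signReps :=
    separatedUpToSign_of_disjoint (isoClosed_Cset _) (fun _ => neg_mem_Cset)
      (disjoint_Cset_signReps _)
  rw [Cset_div_inter_AEn, countClasses_quotients_union Cset_subset_Aset
      signReps_union_Cset_subset_Aset signReps_subset_Aset Cset_subset_Aset hsep,
    countClasses_quotients Cset_subset_Aset signReps_union_Cset_subset_Aset (isoClosed_Cset _)
      (isoClosed_signReps.union (isoClosed_Cset _)) fun _ hg _ hg' _ hh _ hh' hgg' hhh' =>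
        ⟨iso_of_iso_neg (.inr hg) (.inr hg') hgg', iso_of_iso_neg hh hh' hhh'⟩,
    countClasses_quotients signReps_subset_Aset Cset_subset_Aset isoClosed_signReps
      (isoClosed_Cset _) fun _ hg _ hg' _ _ _ _ hiso _ =>
        absurd hiso (not_iso_neg_of_mem_signReps hg hg'),
    sum_Icc_reflect fun i j => countClasses (Cset {Op.div}ᶜ ∩ AEn i) *
      countClasses ((signReps ∪ Cset {Op.div}ᶜ) ∩ AEn j), ← Finset.sum_add_distrib]
  refine Finset.sum_congr rfl fun k _ => ?_
  rw [countClasses_signReps_union_Cset_inter_AEn, countClasses_signReps_inter_AEn,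
    countClasses_Bset_inter_AEn]
  ring

end QuotientCounts

/-- For `n ≥ 2`:
`|ℱ̄ₙ(÷)| = Σ_{k=1}^{n−1} |ℱ̄_k(+,×)|·|ℱ̄_{n−k}(+,×)|`,
`|ℬ̄ₙ(÷)| = Σ_{k=1}^{n−1} |ℬ̄_{n−k}(+,−,×)|·(2|ℱ̄_k(+,×)| + ½|ℬ̄_k(+,−,×)|)`, and
`|𝒞̄ₙ(÷)| = Σ_{k=1}^{n−1} |𝒞̄_{n−k}(+,−,×)|·(2|ℱ̄_k(+,×)| + |ℬ̄_k(+,−,×)| + |𝒞̄_k(+,−,×)|)`. -/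
theorem count_div (n : ℕ) (hn : 2 ≤ n) :
    countClasses (Fset {Op.div} ∩ AEn n) =
      ∑ k ∈ Finset.Icc 1 (n - 1),
        countClasses (Fset {Op.add, Op.mul} ∩ AEn k) *
          countClasses (Fset {Op.add, Op.mul} ∩ AEn (n - k)) ∧
    (countClasses (Bset {Op.div} ∩ AEn n) : ℚ) =
      ∑ k ∈ Finset.Icc 1 (n - 1),
        (countClasses (Bset {Op.add, Op.sub, Op.mul} ∩ AEn (n - k)) : ℚ) *
          (2 * (countClasses (Fset {Op.add, Op.mul} ∩ AEn k) : ℚ) +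
            (1 / 2) * (countClasses (Bset {Op.add, Op.sub, Op.mul} ∩ AEn k) : ℚ)) ∧
    countClasses (Cset {Op.div} ∩ AEn n) =
      ∑ k ∈ Finset.Icc 1 (n - 1),
        countClasses (Cset {Op.add, Op.sub, Op.mul} ∩ AEn (n - k)) *
          (2 * countClasses (Fset {Op.add, Op.mul} ∩ AEn k) +
            countClasses (Bset {Op.add, Op.sub, Op.mul} ∩ AEn k) +
            countClasses (Cset {Op.add, Op.sub, Op.mul} ∩ AEn k)) := by
  rw [Fset_add_mul_eq, add_sub_mul_eq_compl_div]
  refine ⟨countClasses_Fset_div n, ?_, countClasses_Cset_div n⟩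
  rw [countClasses_Bset_div]
  push_cast
  refine Finset.sum_congr rfl fun k _ => ?_
  rw [countClasses_Bset_inter_AEn k]
  push_cast
  ring

end
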